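/- arXiv:1901.04034 — 3 statements merged into one kernel-verified Lean document; each statement's English description precedes it below -/
import Mathlib

section
/- Let T be a 2-spider of order d such that every leg of T has order at most d/2 and such that it is not the case that T has exactly three legs with two of them of order one. Then for every integer n with 4 ≤ n < d/2: c_n(T) = ρ_{n,1}(T) + ρ_{n,2}(T), and c_{n−1,1}(T) = (c_1−1)·ρ_{n−1,1}(T) + (c_1−2)·ρ_{n−1,2}(T) + 2·ρ_{n,1}(T) + 3·ρ_{n,2}(T), where c_1 = c_1(T). -/
open SimpleGraph

/-- The multiset of orders of the connected components of a graph on a finite vertex set. -/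
noncomputable def compSizes {V : Type} [Fintype V] (H : SimpleGraph V) : Multiset ℕ :=
  haveI : DecidableEq H.ConnectedComponent := Classical.decEq _
  (Finset.univ.image H.connectedComponentMk).val.map fun c => c.supp.ncard

/-- `cCoeff G lam` is the number of subsets `F` of the edge set of `G` such that the
multiset of orders of the connected components of the spanning subgraph `(V, F)`
is exactly `lam`.  For a tree `T` this is the coefficient `c_lam(T)`. -/
noncomputable def cCoeff {V : Type} [Fintype V] (G : SimpleGraph V) (lam : Multiset ℕ) : ℕ :=
  Set.ncard {F : Set (Sym2 V) | F ⊆ G.edgeSet ∧ compSizes (SimpleGraph.fromEdgeSet F) = lam}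

/-- `IsRootedSubtree T e v R r` says: `e` is an edge of `T`, `v` is an endpoint of `e`,
and the connected component of `v` after deleting `e`, rooted at `v`, is isomorphic to
the rooted tree `(R, r)` via a graph isomorphism sending root to root. -/
def IsRootedSubtree {V W : Type} (T : SimpleGraph V) (e : Sym2 V) (v : V)
    (R : SimpleGraph W) (r : W) : Prop :=
  e ∈ T.edgeSet ∧ v ∈ e ∧
  ∃ φ : R ≃g (T.deleteEdges {e}).induce ((T.deleteEdges {e}).connectedComponentMk v).supp,
    (φ r : V) = v

/-- `rho T R r` is the number of rooted subtrees of `T` isomorphic to the rooted tree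
`(R, r)`, counted over all pairs (edge `e`, endpoint `v` of `e`). -/
noncomputable def rho {V W : Type} [Fintype V] (T : SimpleGraph V)
    (R : SimpleGraph W) (r : W) : ℕ :=
  Set.ncard {p : Sym2 V × V | IsRootedSubtree T p.1 p.2 R r}

/-- The number of leaves (vertices of degree one) of a graph. -/
noncomputable def leafCount {V : Type} [Fintype V] (G : SimpleGraph V) : ℕ :=
  Set.ncard {v : V | (G.neighborSet v).ncard = 1}

/-- The rooted tree `R_{n,2}` (for `n ≥ 3`): the path `0 - 1 - ⋯ - (n-2)` rooted at the
leaf `0`, together with an extra leaf `n-1` attached to the second outward-most vertex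
`n-3` from the root.  (`R_{n,1}` is `SimpleGraph.pathGraph n` rooted at the leaf `0`.) -/
def Rtwo (n : ℕ) : SimpleGraph (Fin n) :=
  SimpleGraph.fromRel fun i j =>
    (j.val = i.val + 1 ∧ j.val ≤ n - 2) ∨ (i.val = n - 3 ∧ j.val = n - 1)

/-- The order of the "leg" of `T` at `u` hanging off the vertex `t`: the number of vertices
of the connected component of `u` after deleting the edge `{t, u}`. -/
noncomputable def legOrder {V : Type} (T : SimpleGraph V) (t u : V) : ℕ :=
  ((T.deleteEdges {s(t, u)}).connectedComponentMk u).supp.ncard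

/-- The leg of `T` at `u` (hanging off `t`) is a 1-leg: the component of `u` in `T − t`,
rooted at `u`, is isomorphic to some `R_{n,1}`, i.e. a path rooted at a leaf. -/
def IsOneLegAt {V : Type} (T : SimpleGraph V) (t u : V) : Prop :=
  ∃ n : ℕ, ∃ h : 0 < n, IsRootedSubtree T s(t, u) u (SimpleGraph.pathGraph n) ⟨0, h⟩

/-- The leg of `T` at `u` (hanging off `t`) is a 2-leg: the component of `u` in `T − t`,
rooted at `u`, is isomorphic to some `R_{n,2}` with `n ≥ 3`. -/
def IsTwoLegAt {V : Type} (T : SimpleGraph V) (t u : V) : Prop :=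
  ∃ n : ℕ, ∃ h : 3 ≤ n, IsRootedSubtree T s(t, u) u (Rtwo n) ⟨0, by omega⟩

/-- `T` is a 2-spider with torso `t`: `T` is a tree, `t` has degree at least 3, and every
connected component of `T − t`, rooted at its vertex adjacent to `t`, is isomorphic as a
rooted tree to some `R_{n,1}` (a 1-leg) or to some `R_{n,2}` with `n ≥ 3` (a 2-leg). -/
def IsTwoSpiderWithTorso {V : Type} (T : SimpleGraph V) (t : V) : Prop :=
  T.IsTree ∧ 3 ≤ (T.neighborSet t).ncard ∧
    ∀ u : V, T.Adj t u → IsOneLegAt T t u ∨ IsTwoLegAt T t u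

/-- `T` is a 2-spider. -/
def IsTwoSpider {V : Type} (T : SimpleGraph V) : Prop :=
  ∃ t : V, IsTwoSpiderWithTorso T t

/-- `T`, as a 2-spider with torso `t`, has exactly three legs, two of which have order one. -/
def ThreeLegsTwoSingletons {V : Type} (T : SimpleGraph V) (t : V) : Prop :=
  (T.neighborSet t).ncard = 3 ∧
  ∃ u₁ u₂ : V, u₁ ≠ u₂ ∧ T.Adj t u₁ ∧ T.Adj t u₂ ∧
    legOrder T t u₁ = 1 ∧ legOrder T t u₂ = 1

/-! ### Branches of a tree -/

namespace TwoSpiderAux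

/-- The branch of the tree at the dart `(u, v)`: the side of `v` after deleting the edge. -/
def Br {V : Type} (T : SimpleGraph V) (u v : V) : Set V :=
  ((T.deleteEdges {s(u, v)}).connectedComponentMk v).supp

section
variable {V : Type} {T : SimpleGraph V}

lemma closed_univ (hT : T.IsTree) (S : Set V) (hne : S.Nonempty)
    (h : ∀ x y, T.Adj x y → x ∈ S → y ∈ S) : S = Set.univ := by
  obtain ⟨a, ha⟩ := hne
  ext b
  simp only [Set.mem_univ, iff_true]
  by_contra hb
  obtain ⟨p⟩ := hT.connected.preconnected a b
  obtain ⟨e, -, h1, h2⟩ := p.exists_boundary_dart S ha hb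
  exact h2 (h _ _ e.adj h1)

lemma self_mem_Br (u v : V) : v ∈ Br T u v := by
  simp [Br]

lemma not_mem_Br (hT : T.IsTree) {u v : V} (h : T.Adj u v) : u ∉ Br T u v := by
  intro hm
  have hb := (SimpleGraph.isAcyclic_iff_forall_adj_isBridge.1 hT.isAcyclic) h
  rw [SimpleGraph.isBridge_iff] at hb
  apply hb
  simpa [Br] using hm

lemma cross (u v : V) {x y : V} (h : T.Adj x y) (hx : x ∈ Br T u v)
    (hy : y ∉ Br T u v) (hu : u ∉ Br T u v) : x = v ∧ y = u := by
  by_cases he : s(x, y) = s(u, v)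
  · rcases Sym2.eq_iff.1 he with ⟨rfl, rfl⟩ | ⟨rfl, rfl⟩
    · exact absurd hx hu
    · exact ⟨rfl, rfl⟩
  · exfalso
    apply hy
    have : (T.deleteEdges {s(u, v)}).Adj y x := by
      simp only [SimpleGraph.deleteEdges_adj, Set.mem_singleton_iff]
      exact ⟨h.symm, by rwa [Sym2.eq_swap]⟩
    simp only [Br, SimpleGraph.ConnectedComponent.mem_supp_iff,
      SimpleGraph.ConnectedComponent.eq] at hx ⊢
    exact this.reachable.trans hx

lemma crossT (hT : T.IsTree) {u v : V} (huv : T.Adj u v) {x y : V} (h : T.Adj x y)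
    (hx : x ∈ Br T u v) (hy : y ∉ Br T u v) : x = v ∧ y = u :=
  cross u v h hx hy (not_mem_Br hT huv)

lemma Br_unique (hT : T.IsTree) {u v : V} (huv : T.Adj u v) (S : Set V) (hv : v ∈ S)
    (hu : u ∉ S) (h : ∀ x y, T.Adj x y → x ∈ S → y ∉ S → x = v ∧ y = u) : S = Br T u v := by
  have h1 := self_mem_Br (T := T) u v
  have h2 := not_mem_Br hT huv
  have h3 := fun x y hxy hx hy => crossT hT huv (x := x) (y := y) hxy hx hy
  have := closed_univ hT {x | x ∈ S ↔ x ∈ Br T u v} ⟨v, by simp [hv, h1]⟩ (by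
    intro x y hxy hx
    have a1 := h x y hxy
    have a2 := h y x hxy.symm
    have a3 := h3 x y hxy
    have a4 := h3 y x hxy.symm
    simp only [Set.mem_ofPred_eq] at hx ⊢
    grind)
  ext x
  have hx : x ∈ {x | x ∈ S ↔ x ∈ Br T u v} := by rw [this]; trivial
  exact hx

lemma Br_compl (hT : T.IsTree) {u v : V} (huv : T.Adj u v) : (Br T u v)ᶜ = Br T v u := by
  apply Br_unique hT huv.symm
  · exact not_mem_Br hT huv
  · simpa using self_mem_Br u v
  · intro x y hxy hx hy
    simp only [Set.mem_compl_iff, not_not] at hx hy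
    exact (crossT hT huv hxy.symm hy hx).symm

lemma mem_Br_swap (hT : T.IsTree) {u v : V} (huv : T.Adj u v) (x : V) :
    x ∈ Br T v u ↔ x ∉ Br T u v := by
  rw [← Br_compl hT huv]; rfl

lemma ncard_swap [Fintype V] (hT : T.IsTree) {u v : V} (huv : T.Adj u v) :
    (Br T u v).ncard + (Br T v u).ncard = Fintype.card V := by
  rw [← Br_compl hT huv, Set.ncard_add_ncard_compl, Nat.card_eq_fintype_card]

lemma ncard_pos [Fintype V] (u v : V) : 0 < (Br T u v).ncard :=
  (Set.ncard_pos (Set.toFinite _)).2 ⟨v, self_mem_Br u v⟩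

/-- Nesting of branches. -/
lemma Br_nested (hT : T.IsTree) {a b x y : V} (hab : T.Adj a b) (hxy : T.Adj x y)
    (h1 : b ∈ Br T x y) (h2 : x ∉ Br T a b) : Br T a b ⊆ Br T x y := by
  by_contra hc
  obtain ⟨z, hz, hz'⟩ := Set.not_subset.1 hc
  have := closed_univ hT (Br T a b \ Br T x y) ⟨z, hz, hz'⟩ (by
    rintro p q hpq ⟨hp1, hp2⟩
    have a1 := crossT hT hab hpq hp1
    have a2 := fun hq => crossT hT hxy hpq.symm hq hp2
    grind)
  have : a ∈ (Br T a b \ Br T x y) := by rw [this]; trivial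
  exact not_mem_Br hT hab this.1

/-- Two branches whose darts point away from each other are disjoint. -/
lemma Br_disjoint (hT : T.IsTree) {a b x y : V} (hab : T.Adj a b) (hxy : T.Adj x y)
    (_hne : s(a, b) ≠ s(x, y)) (h1 : b ∉ Br T x y) (h2 : x ∉ Br T a b) :
    Disjoint (Br T a b) (Br T x y) := by
  rw [Set.disjoint_left]
  intro z hz hz'
  have := closed_univ hT (Br T a b ∩ Br T x y) ⟨z, hz, hz'⟩ (by
    rintro p q hpq ⟨hp1, hp2⟩
    have a1 := crossT hT hab hpq hp1
    have a2 := crossT hT hxy hpq hp2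
    have a3 := @crossT _ _ hT _ _ hab y x hxy.symm
    grind)
  have : a ∈ (Br T a b ∩ Br T x y) := by rw [this]; trivial
  exact not_mem_Br hT hab this.1

/-- If two branches are disjoint for distinct edges, tails are outside of both. -/
lemma tail_not_mem (hT : T.IsTree) {a b x y : V} (hab : T.Adj a b) (hxy : T.Adj x y)
    (hne : s(a, b) ≠ s(x, y)) (hd : Disjoint (Br T a b) (Br T x y)) : a ∉ Br T x y := by
  intro ha
  have hb : b ∉ Br T x y := Set.disjoint_left.1 hd (self_mem_Br a b)
  obtain ⟨rfl, rfl⟩ := crossT hT hxy hab ha hb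
  exact hne Sym2.eq_swap

/-- Orientation uniqueness. -/
lemma orient_unique (hT : T.IsTree) {a b x y : V} (hab : T.Adj a b) (hxy : T.Adj x y)
    (hne : s(a, b) ≠ s(x, y)) (hd : Disjoint (Br T a b) (Br T x y)) :
    ¬ Disjoint (Br T b a) (Br T x y) ∧ ¬ Disjoint (Br T b a) (Br T y x) := by
  constructor
  · intro h
    have h1 := Set.disjoint_left.1 hd.symm (self_mem_Br x y)
    rw [← mem_Br_swap hT hab] at h1
    exact Set.disjoint_left.1 h h1 (self_mem_Br x y)
  · intro h
    have h1 := tail_not_mem hT hab hxy hne hd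
    rw [← mem_Br_swap hT hxy] at h1
    exact Set.disjoint_left.1 h (self_mem_Br b a) h1

lemma orient_exists (hT : T.IsTree) {a b x y : V} (hab : T.Adj a b) (hxy : T.Adj x y)
    (hne : s(a, b) ≠ s(x, y)) : ∃ a' b' x' y', T.Adj a' b' ∧ T.Adj x' y' ∧
      s(a', b') = s(a, b) ∧ s(x', y') = s(x, y) ∧ Disjoint (Br T a' b') (Br T x' y') := by
  obtain ⟨x', y', hxy', he, hx'⟩ : ∃ x' y', T.Adj x' y' ∧ s(x', y') = s(x, y) ∧
      a ∉ Br T x' y' := by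
    by_cases h : a ∈ Br T x y
    · exact ⟨y, x, hxy.symm, Sym2.eq_swap, by rw [mem_Br_swap hT hxy]; simpa⟩
    · exact ⟨x, y, hxy, rfl, h⟩
  have hb' : b ∉ Br T x' y' := by
    intro hb
    obtain ⟨rfl, rfl⟩ := crossT hT hxy' hab.symm hb hx'
    exact hne he
  by_cases h : x' ∈ Br T a b
  · refine ⟨b, a, x', y', hab.symm, hxy', Sym2.eq_swap, he, ?_⟩
    apply Br_disjoint hT hab.symm hxy' _ hx'
    · rw [mem_Br_swap hT hab]; simpa
    · rw [he, Sym2.eq_swap]; exact hne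
  · refine ⟨a, b, x', y', hab, hxy', rfl, he, ?_⟩
    apply Br_disjoint hT hab hxy' _ hb' h
    rw [he]; exact hne

end

/-! ### Component sizes -/
section
set_option linter.unusedSectionVars false
variable {V : Type} [Fintype V] {T : SimpleGraph V}

lemma supp_eq (H : SimpleGraph V) (S : Set V) (v : V) (hv : v ∈ S)
    (hc : ∀ x y, H.Adj x y → x ∈ S → y ∈ S)
    (hmin : ∀ S' ⊆ S, v ∈ S' → (∀ x y, H.Adj x y → x ∈ S' → y ∈ S') → S' = S) :
    (H.connectedComponentMk v).supp = S := by
  apply hmin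
  · intro x hx
    by_contra hxS
    simp only [SimpleGraph.ConnectedComponent.mem_supp_iff,
      SimpleGraph.ConnectedComponent.eq] at hx
    obtain ⟨p⟩ := hx.symm
    obtain ⟨e, -, h1, h2⟩ := p.exists_boundary_dart S hv hxS
    exact h2 (hc _ _ e.adj h1)
  · simp
  · intro x y hxy hx
    simp only [SimpleGraph.ConnectedComponent.mem_supp_iff,
      SimpleGraph.ConnectedComponent.eq] at hx ⊢
    exact hxy.symm.reachable.trans hx

lemma card_compSizes (H : SimpleGraph V) :
    Multiset.card (compSizes H) = Nat.card H.ConnectedComponent := by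
  classical
  unfold compSizes
  rw [Multiset.card_map]
  have : Fintype H.ConnectedComponent := Fintype.ofFinite _
  rw [Nat.card_eq_fintype_card, ← Finset.card_univ]
  change Finset.card _ = _
  congr 1
  ext c
  simp only [Finset.mem_image, Finset.mem_univ, true_and, iff_true]
  exact c.exists_rep

lemma compSizes_two (H : SimpleGraph V) (a b : V)
    (hab : (H.connectedComponentMk a) ≠ (H.connectedComponentMk b))
    (hall : ∀ x, x ∈ (H.connectedComponentMk a).supp ∨ x ∈ (H.connectedComponentMk b).supp) :
    compSizes H = {(H.connectedComponentMk a).supp.ncard,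
      (H.connectedComponentMk b).supp.ncard} := by
  classical
  unfold compSizes
  have : (@Finset.image _ _ (Classical.decEq _) H.connectedComponentMk Finset.univ) =
      @insert _ _ (@Finset.instInsert _ (Classical.decEq _)) (H.connectedComponentMk a)
        {H.connectedComponentMk b} := by
    ext c
    simp only [Finset.mem_image, Finset.mem_univ, true_and, Finset.mem_insert,
      Finset.mem_singleton]
    constructor
    · rintro ⟨x, rfl⟩
      exact hall x
    · rintro (rfl | rfl)
      · exact ⟨a, rfl⟩
      · exact ⟨b, rfl⟩
  simp only [this]
  rw [Finset.insert_val_of_notMem (by simpa using hab)]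
  simp

lemma compSizes_three (H : SimpleGraph V) (a b c : V)
    (hab : (H.connectedComponentMk a) ≠ (H.connectedComponentMk b))
    (hac : (H.connectedComponentMk a) ≠ (H.connectedComponentMk c))
    (hbc : (H.connectedComponentMk b) ≠ (H.connectedComponentMk c))
    (hall : ∀ x, x ∈ (H.connectedComponentMk a).supp ∨ x ∈ (H.connectedComponentMk b).supp
      ∨ x ∈ (H.connectedComponentMk c).supp) :
    compSizes H = {(H.connectedComponentMk a).supp.ncard,
      (H.connectedComponentMk b).supp.ncard, (H.connectedComponentMk c).supp.ncard} := by
  classical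
  unfold compSizes
  have : (@Finset.image _ _ (Classical.decEq _) H.connectedComponentMk Finset.univ) =
      @insert _ _ (@Finset.instInsert _ (Classical.decEq _)) (H.connectedComponentMk a)
       (@insert _ _ (@Finset.instInsert _ (Classical.decEq _)) (H.connectedComponentMk b)
        {H.connectedComponentMk c}) := by
    ext d
    simp only [Finset.mem_image, Finset.mem_univ, true_and, Finset.mem_insert,
      Finset.mem_singleton]
    constructor
    · rintro ⟨x, rfl⟩
      exact hall x
    · rintro (rfl | rfl | rfl)
      · exact ⟨a, rfl⟩
      · exact ⟨b, rfl⟩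
      · exact ⟨c, rfl⟩
  simp only [this]
  rw [Finset.insert_val_of_notMem (by simp [hab, hac]),
    Finset.insert_val_of_notMem (by simpa using hbc)]
  simp

lemma sizes_one_edge (hT : T.IsTree) {a b : V} (hab : T.Adj a b) :
    compSizes (SimpleGraph.fromEdgeSet (T.edgeSet \ {s(a, b)})) =
      {(Br T a b).ncard, (Br T b a).ncard} := by
  set H := SimpleGraph.fromEdgeSet (T.edgeSet \ {s(a, b)}) with hH
  have hadj : ∀ x y, H.Adj x y ↔ T.Adj x y ∧ s(x, y) ≠ s(a, b) := by
    intro x y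
    simp only [hH, SimpleGraph.fromEdgeSet_adj, Set.mem_sdiff, SimpleGraph.mem_edgeSet,
      Set.mem_singleton_iff]
    exact ⟨fun h => h.1, fun h => ⟨h, h.1.ne⟩⟩
  have key : ∀ u v, T.Adj u v → s(u, v) = s(a, b) →
      (H.connectedComponentMk v).supp = Br T u v := by
    intro u v huv he
    apply supp_eq _ _ _ (self_mem_Br u v)
    · intro x y hxy hx
      rw [hadj] at hxy
      by_contra hy
      obtain ⟨rfl, rfl⟩ := crossT hT huv hxy.1 hx hy
      exact hxy.2 (by rw [← he, Sym2.eq_swap])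
    · intro S' hS hv hc
      apply Br_unique hT huv _ hv
      · intro h; exact not_mem_Br hT huv (hS h)
      · intro x y hxy hx hy
        by_cases hxe : s(x, y) = s(a, b)
        · rw [← he] at hxe
          rcases Sym2.eq_iff.1 hxe with ⟨rfl, rfl⟩ | ⟨rfl, rfl⟩
          · exact absurd hv hy
          · exact ⟨rfl, rfl⟩
        · exact absurd (hc x y ((hadj x y).2 ⟨hxy, hxe⟩) hx) hy
  have k1 := key a b hab rfl
  have k2 := key b a hab.symm Sym2.eq_swap
  rw [compSizes_two H b a, k1, k2]
  · intro h
    rw [h, k2] at k1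
    have := self_mem_Br (T := T) a b
    rw [← k1] at this
    exact not_mem_Br hT hab.symm this
  · intro x
    rw [k1, k2, mem_Br_swap hT hab]
    tauto

lemma sizes_two_edges (hT : T.IsTree) {a b u v : V} (hab : T.Adj a b) (huv : T.Adj u v)
    (hne : s(a, b) ≠ s(u, v)) (hd : Disjoint (Br T a b) (Br T u v)) :
    compSizes (SimpleGraph.fromEdgeSet (T.edgeSet \ {s(a, b), s(u, v)})) =
      {(Br T a b).ncard, (Br T u v).ncard,
        Fintype.card V - ((Br T a b).ncard + (Br T u v).ncard)} := by
  set H := SimpleGraph.fromEdgeSet (T.edgeSet \ {s(a, b), s(u, v)}) with hH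
  have hadj : ∀ x y, H.Adj x y ↔ T.Adj x y ∧ s(x, y) ≠ s(a, b) ∧ s(x, y) ≠ s(u, v) := by
    intro x y
    simp only [hH, SimpleGraph.fromEdgeSet_adj, Set.mem_sdiff, SimpleGraph.mem_edgeSet,
      Set.mem_insert_iff, Set.mem_singleton_iff, not_or]
    exact ⟨fun h => h.1, fun h => ⟨h, h.1.ne⟩⟩
  clear_value H
  have key : ∀ a b u v, T.Adj a b → T.Adj u v → s(a, b) ≠ s(u, v) →
      Disjoint (Br T a b) (Br T u v) →
      (∀ x y, H.Adj x y ↔ T.Adj x y ∧ s(x, y) ≠ s(a, b) ∧ s(x, y) ≠ s(u, v)) →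
      (H.connectedComponentMk b).supp = Br T a b := by
    intro a b u v hab huv hne hd hadj
    have hu := tail_not_mem hT huv hab hne.symm hd.symm
    have hv := Set.disjoint_left.1 hd.symm (self_mem_Br u v)
    apply supp_eq _ _ _ (self_mem_Br a b)
    · intro x y hxy hx
      rw [hadj] at hxy
      by_contra hy
      obtain ⟨rfl, rfl⟩ := crossT hT hab hxy.1 hx hy
      exact hxy.2.1 Sym2.eq_swap
    · intro S' hS hb hc
      apply Br_unique hT hab _ hb
      · intro h; exact not_mem_Br hT hab (hS h)
      · intro x y hxy hx hy
        by_cases h1 : s(x, y) = s(a, b)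
        · rcases Sym2.eq_iff.1 h1 with ⟨rfl, rfl⟩ | ⟨rfl, rfl⟩
          · exact absurd hb hy
          · exact ⟨rfl, rfl⟩
        · by_cases h2 : s(x, y) = s(u, v)
          · rcases Sym2.eq_iff.1 h2 with ⟨rfl, rfl⟩ | ⟨rfl, rfl⟩
            · exact absurd (hS hx) hu
            · exact absurd (hS hx) hv
          · exact absurd (hc x y ((hadj x y).2 ⟨hxy, h1, h2⟩) hx) hy
  have k1 := key a b u v hab huv hne hd hadj
  have k2 := key u v a b huv hab hne.symm hd.symm (by intro x y; rw [hadj]; tauto)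
  have ha := tail_not_mem hT hab huv hne hd
  have ha' := not_mem_Br hT hab
  have hb := self_mem_Br (T := T) a b
  have hv := self_mem_Br (T := T) u v
  have hu := tail_not_mem hT huv hab hne.symm hd.symm
  have hu' := not_mem_Br hT huv
  have hdl : ∀ x, x ∈ Br T a b → x ∉ Br T u v := fun x hx => Set.disjoint_left.1 hd hx
  have k3 : (H.connectedComponentMk a).supp = (Br T a b ∪ Br T u v)ᶜ := by
    apply supp_eq
    · simp [ha, ha']
    · intro x y hxy hx
      rw [hadj] at hxy
      simp only [Set.mem_compl_iff, Set.mem_union, not_or] at hx ⊢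
      constructor
      · intro hy
        obtain ⟨rfl, rfl⟩ := crossT hT hab hxy.1.symm hy hx.1
        exact hxy.2.1 rfl
      · intro hy
        obtain ⟨rfl, rfl⟩ := crossT hT huv hxy.1.symm hy hx.2
        exact hxy.2.2 rfl
    · intro S' hS haS hc
      have hS1 : ∀ x ∈ S', x ∉ Br T a b ∧ x ∉ Br T u v := by
        intro x hx
        simpa [not_or] using hS hx
      have := closed_univ hT {x | x ∈ S' ∨ x ∈ Br T a b ∨ (x ∈ Br T u v ∧ u ∈ S')}
        ⟨a, Or.inl haS⟩ (by
          intro x y hxy hx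
          simp only [Set.mem_ofPred_eq] at hx ⊢
          by_cases h1 : s(x, y) = s(a, b)
          · rcases Sym2.eq_iff.1 h1 with ⟨rfl, rfl⟩ | ⟨rfl, rfl⟩
            · tauto
            · tauto
          by_cases h2 : s(x, y) = s(u, v)
          · rcases Sym2.eq_iff.1 h2 with ⟨rfl, rfl⟩ | ⟨rfl, rfl⟩
            · tauto
            · rcases hx with hx | hx | hx
              · exact absurd hv (hS1 _ hx).2
              · exact absurd hv (hdl _ hx)
              · tauto
          have h3 := hc x y ((hadj x y).2 ⟨hxy, h1, h2⟩)
          rcases hx with hx | hx | hx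
          · tauto
          · by_cases hy : y ∈ Br T a b
            · tauto
            · obtain ⟨rfl, rfl⟩ := crossT hT hab hxy hx hy
              tauto
          · by_cases hy : y ∈ Br T u v
            · tauto
            · obtain ⟨rfl, rfl⟩ := crossT hT huv hxy hx.1 hy
              tauto)
      apply Set.Subset.antisymm hS
      intro x hx
      have hx' : x ∈ {x | x ∈ S' ∨ x ∈ Br T a b ∨ (x ∈ Br T u v ∧ u ∈ S')} := by
        rw [this]; trivial
      simp only [Set.mem_compl_iff, Set.mem_union, not_or] at hx
      simp only [Set.mem_ofPred_eq] at hx'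
      tauto
  have hk3 : ((Br T a b ∪ Br T u v)ᶜ).ncard =
      Fintype.card V - ((Br T a b).ncard + (Br T u v).ncard) := by
    have := Set.ncard_add_ncard_compl (Br T a b ∪ Br T u v)
    rw [Set.ncard_union_eq hd, Nat.card_eq_fintype_card] at this
    omega
  rw [compSizes_three H b v a, k1, k2, k3, hk3]
  · intro h
    rw [h, k2] at k1
    rw [← k1] at hb
    exact hdl b (k1 ▸ hb) hb
  · intro h
    rw [h, k3] at k1
    rw [← k1] at ha'
    exact ha' (by simp [ha, k1 ▸ ha'])
  · intro h
    rw [h, k3] at k2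
    rw [← k2] at hv
    simp only [Set.mem_compl_iff, Set.mem_union, not_or] at hv
    exact hv.2 (self_mem_Br u v)
  · intro x
    rw [k1, k2, k3]
    simp only [Set.mem_compl_iff, Set.mem_union]
    tauto

/-- Deleting further edges of a tree strictly increases the number of components. -/
lemma card_lt (hT : T.IsTree) {F F' : Set (Sym2 V)} (hF : F ⊆ T.edgeSet) (h : F' ⊆ F)
    (hne : F' ≠ F) :
    Nat.card (SimpleGraph.fromEdgeSet F).ConnectedComponent <
      Nat.card (SimpleGraph.fromEdgeSet F').ConnectedComponent := by
  obtain ⟨e, he, he'⟩ : ∃ e ∈ F, e ∉ F' := by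
    by_contra hc
    push Not at hc
    exact hne (Set.Subset.antisymm h hc)
  have hle : SimpleGraph.fromEdgeSet F' ≤ SimpleGraph.fromEdgeSet F :=
    SimpleGraph.fromEdgeSet_mono h
  refine lt_of_le_of_ne (SimpleGraph.ConnectedComponent.card_le_card_of_le hle) ?_
  intro hcard
  have hs := SimpleGraph.ConnectedComponent.surjective_map_ofLE hle
  have hb := (Nat.bijective_iff_surjective_and_card _).2 ⟨hs, hcard.symm⟩
  induction e with | h u v
  have huv : T.Adj u v := hF he
  have h1 : (SimpleGraph.fromEdgeSet F).connectedComponentMk u =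
      (SimpleGraph.fromEdgeSet F).connectedComponentMk v := by
    apply SimpleGraph.ConnectedComponent.sound
    apply SimpleGraph.Adj.reachable
    rw [SimpleGraph.fromEdgeSet_adj]
    exact ⟨he, huv.ne⟩
  have h2 : (SimpleGraph.fromEdgeSet F').connectedComponentMk u =
      (SimpleGraph.fromEdgeSet F').connectedComponentMk v := by
    apply hb.1
    simpa using h1
  have h3 := SimpleGraph.ConnectedComponent.exact h2
  apply not_mem_Br hT huv
  simp only [Br, SimpleGraph.ConnectedComponent.mem_supp_iff,
      SimpleGraph.ConnectedComponent.eq]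
  apply h3.mono
  intro x y hxy
  rw [SimpleGraph.fromEdgeSet_adj] at hxy
  simp only [SimpleGraph.deleteEdges_adj, Set.mem_singleton_iff]
  exact ⟨hF (h hxy.1), fun hh => he' (hh ▸ hxy.1)⟩

lemma card_edgeSet_comp (hT : T.IsTree) :
    Nat.card (SimpleGraph.fromEdgeSet T.edgeSet).ConnectedComponent = 1 := by
  rw [SimpleGraph.fromEdgeSet_edgeSet]
  have := hT.connected
  have h1 := this.preconnected.subsingleton_connectedComponent
  have := hT.connected.nonempty
  rw [Nat.card_eq_one_iff_unique]
  exact ⟨h1, ⟨T.connectedComponentMk (Classical.arbitrary V)⟩⟩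

lemma card_two (hT : T.IsTree) {F : Set (Sym2 V)} (hF : F ⊆ T.edgeSet)
    (h : Multiset.card (compSizes (SimpleGraph.fromEdgeSet F)) = 2) :
    ∃ a b, T.Adj a b ∧ F = T.edgeSet \ {s(a, b)} := by
  rw [card_compSizes] at h
  have h1 := card_edgeSet_comp hT
  obtain ⟨e, he, he'⟩ : ∃ e ∈ T.edgeSet, e ∉ F := by
    by_contra hc
    push Not at hc
    rw [Set.Subset.antisymm hF hc] at h
    omega
  induction e with | h a b
  refine ⟨a, b, he, ?_⟩
  by_contra hne
  have h2 := card_lt hT (F := T.edgeSet \ {s(a, b)}) Set.sdiff_subset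
    (F' := F) (fun x hx => ⟨hF hx, fun hh => he' (hh ▸ hx)⟩) hne
  rw [← card_compSizes, sizes_one_edge hT he] at h2
  rw [h] at h2
  simp at h2

lemma card_three (hT : T.IsTree) {F : Set (Sym2 V)} (hF : F ⊆ T.edgeSet)
    (h : Multiset.card (compSizes (SimpleGraph.fromEdgeSet F)) = 3) :
    ∃ a b u v, T.Adj a b ∧ T.Adj u v ∧ s(a, b) ≠ s(u, v) ∧ Disjoint (Br T a b) (Br T u v) ∧
      F = T.edgeSet \ {s(a, b), s(u, v)} := by
  have h' := h
  rw [card_compSizes] at h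
  have h1 := card_edgeSet_comp hT
  obtain ⟨e, he, he'⟩ : ∃ e ∈ T.edgeSet, e ∉ F := by
    by_contra hc
    push Not at hc
    rw [Set.Subset.antisymm hF hc] at h
    omega
  obtain ⟨f, hf, hf', hef⟩ : ∃ f ∈ T.edgeSet, f ∉ F ∧ e ≠ f := by
    by_contra hc
    push Not at hc
    have : F = T.edgeSet \ {e} := by
      ext x
      constructor
      · intro hx
        exact ⟨hF hx, fun hh => he' (hh ▸ hx)⟩
      · intro hx
        by_contra hxF
        exact hx.2 (hc x hx.1 hxF).symm
    induction e with | h a b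
    rw [this, sizes_one_edge hT he] at h'
    simp at h'
  induction e with | h a b
  induction f with | h u v
  obtain ⟨a', b', u', v', hab, huv, e1, e2, hd⟩ := orient_exists hT he hf hef
  rw [← e1] at he' hef
  rw [← e2] at hf' hef
  refine ⟨a', b', u', v', hab, huv, hef, hd, ?_⟩
  by_contra hne
  have h2 := card_lt hT (F := T.edgeSet \ {s(a', b'), s(u', v')}) Set.sdiff_subset
    (F' := F) (fun x hx => ⟨hF hx, by
      rintro (rfl | rfl)
      · exact he' hx
      · exact hf' hx⟩) hne
  rw [← card_compSizes, sizes_two_edges hT hab huv hef hd] at h2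
  rw [h] at h2
  simp at h2

end

/-! ### Counting edge sets through darts -/

/-- Darts whose branch has order `k`. -/
def Dk {V : Type} (T : SimpleGraph V) (k : ℕ) : Set (V × V) :=
  {p | T.Adj p.1 p.2 ∧ (Br T p.1 p.2).ncard = k}

section
variable {V : Type} [Fintype V] {T : SimpleGraph V}

lemma diff_inj {α : Type} {E A B : Set α} (hA : A ⊆ E) (hB : B ⊆ E) (h : E \ A = E \ B) :
    A = B := by
  rw [← Set.sdiff_sdiff_cancel_left hA, h, Set.sdiff_sdiff_cancel_left hB]

lemma cCoeff_two (hT : T.IsTree) (k : ℕ) (hk : 2 * k < Fintype.card V) :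
    cCoeff T {Fintype.card V - k, k} = (Dk T k).ncard := by
  unfold cCoeff
  have : {F : Set (Sym2 V) | F ⊆ T.edgeSet ∧
      compSizes (SimpleGraph.fromEdgeSet F) = {Fintype.card V - k, k}} =
      (fun p : V × V => T.edgeSet \ {s(p.1, p.2)}) '' Dk T k := by
    ext F
    simp only [Set.mem_ofPred_eq, Set.mem_image, Dk, Prod.exists]
    constructor
    · rintro ⟨hF, hc⟩
      obtain ⟨a, b, hab, rfl⟩ := card_two hT hF (by rw [hc]; simp)
      have hs := ncard_swap hT hab
      rw [sizes_one_edge hT hab] at hc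
      have hm : k ∈ ({(Br T a b).ncard, (Br T b a).ncard} : Multiset ℕ) := by rw [hc]; simp
      simp only [Multiset.insert_eq_cons, Multiset.mem_cons, Multiset.mem_singleton] at hm
      rcases hm with hm | hm
      · exact ⟨a, b, ⟨hab, hm.symm⟩, rfl⟩
      · exact ⟨b, a, ⟨hab.symm, hm.symm⟩, by rw [Sym2.eq_swap]⟩
    · rintro ⟨a, b, ⟨hab, hk'⟩, rfl⟩
      refine ⟨Set.sdiff_subset, ?_⟩
      have hs := ncard_swap hT hab
      rw [sizes_one_edge hT hab, Multiset.pair_comm]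
      congr 2
      omega
  rw [this, Set.InjOn.ncard_image]
  rintro ⟨a, b⟩ ⟨hab, h1⟩ ⟨u, v⟩ ⟨huv, h2⟩ h
  simp only at hab h1 huv h2
  have := diff_inj (by simpa using hab) (by simpa using huv) h
  rw [Set.singleton_eq_singleton_iff] at this
  change s(a, b) = s(u, v) at this
  rcases Sym2.eq_iff.1 this with ⟨rfl, rfl⟩ | ⟨rfl, rfl⟩
  · rfl
  · have hs : (Br T a b).ncard + (Br T b a).ncard = Fintype.card V := ncard_swap hT hab
    omega

/-- Pairs of darts with disjoint branches of orders `i` and `j`. -/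
def NN (T : SimpleGraph V) (i j : ℕ) : Set ((V × V) × (V × V)) :=
  {z | z.1 ∈ Dk T i ∧ z.2 ∈ Dk T j ∧ Disjoint (Br T z.1.1 z.1.2) (Br T z.2.1 z.2.2)}

lemma edge_ne (hT : T.IsTree) {a b u v : V} (hab : T.Adj a b)
    (hd : Disjoint (Br T a b) (Br T u v))
    (hs : (Br T a b).ncard + (Br T u v).ncard ≠ Fintype.card V) : s(a, b) ≠ s(u, v) := by
  intro h
  rcases Sym2.eq_iff.1 h with ⟨rfl, rfl⟩ | ⟨rfl, rfl⟩
  · exact Set.disjoint_left.1 hd (self_mem_Br a b) (self_mem_Br a b)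
  · exact hs (ncard_swap hT hab)

lemma multiset_three {x y z p q r : ℕ} (h : ({x, y, z} : Multiset ℕ) = {p, q, r}) :
    (x = p ∧ y = q) ∨ (x = p ∧ y = r) ∨ (x = q ∧ y = p) ∨ (x = q ∧ y = r) ∨
    (x = r ∧ y = p) ∨ (x = r ∧ y = q) := by
  have hx : x ∈ ({p, q, r} : Multiset ℕ) := by rw [← h]; simp
  simp only [Multiset.insert_eq_cons, Multiset.mem_cons, Multiset.mem_singleton] at hx
  have aux : ∀ {y z q r : ℕ}, ({y, z} : Multiset ℕ) = {q, r} → y = q ∨ y = r := by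
    intro y z q r h
    have hy : y ∈ ({q, r} : Multiset ℕ) := by rw [← h]; simp
    simpa using hy
  rcases hx with rfl | rfl | rfl
  · have h' : ({y, z} : Multiset ℕ) = {q, r} := (Multiset.cons_inj_right x).1 h
    have := aux h'
    tauto
  · have h1 : ({p, x, r} : Multiset ℕ) = {x, p, r} := Multiset.cons_swap _ _ _
    rw [h1] at h
    have h' : ({y, z} : Multiset ℕ) = {p, r} := (Multiset.cons_inj_right x).1 h
    have := aux h'
    tauto
  · have h1 : ({p, q, x} : Multiset ℕ) = {x, p, q} := by
      rw [show ({q, x} : Multiset ℕ) = {x, q} from Multiset.pair_comm _ _]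
      exact Multiset.cons_swap _ _ _
    rw [h1] at h
    have h' : ({y, z} : Multiset ℕ) = {p, q} := (Multiset.cons_inj_right x).1 h
    have := aux h'
    tauto

lemma cCoeff_three (hT : T.IsTree) (n : ℕ) (hn : 4 ≤ n) (hd : 2 * n < Fintype.card V) :
    cCoeff T {Fintype.card V - n, n - 1, 1} =
      (NN T 1 (n - 1)).ncard + (NN T 1 (Fintype.card V - n)).ncard +
        (NN T (n - 1) (Fintype.card V - n)).ncard := by
  set d := Fintype.card V with hd'
  set X := NN T 1 (n - 1) ∪ NN T 1 (d - n) ∪ NN T (n - 1) (d - n) with hX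
  have hXc : X.ncard = (NN T 1 (n - 1)).ncard + (NN T 1 (d - n)).ncard +
      (NN T (n - 1) (d - n)).ncard := by
    rw [hX, Set.ncard_union_eq, Set.ncard_union_eq]
    · rw [Set.disjoint_left]
      rintro z ⟨h1, h2, -⟩ ⟨h3, h4, -⟩
      have a1 := h2.2
      have a2 := h4.2
      omega
    · rw [Set.disjoint_left]
      rintro z (⟨h1, h2, -⟩ | ⟨h1, h2, -⟩) ⟨h3, h4, -⟩
      all_goals
        have a1 := h1.2
        have a2 := h3.2
        omega
  have hXm : ∀ z ∈ X, T.Adj z.1.1 z.1.2 ∧ T.Adj z.2.1 z.2.2 ∧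
      Disjoint (Br T z.1.1 z.1.2) (Br T z.2.1 z.2.2) ∧
      (((Br T z.1.1 z.1.2).ncard = 1 ∧ (Br T z.2.1 z.2.2).ncard = n - 1) ∨
       ((Br T z.1.1 z.1.2).ncard = 1 ∧ (Br T z.2.1 z.2.2).ncard = d - n) ∨
       ((Br T z.1.1 z.1.2).ncard = n - 1 ∧ (Br T z.2.1 z.2.2).ncard = d - n)) := by
    rintro z ((⟨h1, h2, h3⟩ | ⟨h1, h2, h3⟩) | ⟨h1, h2, h3⟩)
    · exact ⟨h1.1, h2.1, h3, Or.inl ⟨h1.2, h2.2⟩⟩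
    · exact ⟨h1.1, h2.1, h3, Or.inr (Or.inl ⟨h1.2, h2.2⟩)⟩
    · exact ⟨h1.1, h2.1, h3, Or.inr (Or.inr ⟨h1.2, h2.2⟩)⟩
  rw [← hXc]
  unfold cCoeff
  have : {F : Set (Sym2 V) | F ⊆ T.edgeSet ∧
      compSizes (SimpleGraph.fromEdgeSet F) = {d - n, n - 1, 1}} =
      (fun z : (V × V) × (V × V) => T.edgeSet \ {s(z.1.1, z.1.2), s(z.2.1, z.2.2)}) '' X := by
    ext F
    simp only [Set.mem_ofPred_eq, Set.mem_image]
    constructor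
    · rintro ⟨hF, hc⟩
      obtain ⟨a, b, u, v, hab, huv, hne, hdis, rfl⟩ := card_three hT hF (by rw [hc]; simp)
      rw [sizes_two_edges hT hab huv hne hdis] at hc
      rcases multiset_three hc with h | h | h | h | h | h
      · exact ⟨((u, v), (a, b)), Or.inr ⟨⟨huv, h.2⟩, ⟨hab, h.1⟩, hdis.symm⟩,
          by simp only [Set.pair_comm]⟩
      · exact ⟨((u, v), (a, b)), Or.inl (Or.inr ⟨⟨huv, h.2⟩, ⟨hab, h.1⟩, hdis.symm⟩),
          by simp only [Set.pair_comm]⟩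
      · exact ⟨((a, b), (u, v)), Or.inr ⟨⟨hab, h.1⟩, ⟨huv, h.2⟩, hdis⟩, rfl⟩
      · exact ⟨((u, v), (a, b)), Or.inl (Or.inl ⟨⟨huv, h.2⟩, ⟨hab, h.1⟩, hdis.symm⟩),
          by simp only [Set.pair_comm]⟩
      · exact ⟨((a, b), (u, v)), Or.inl (Or.inr ⟨⟨hab, h.1⟩, ⟨huv, h.2⟩, hdis⟩), rfl⟩
      · exact ⟨((a, b), (u, v)), Or.inl (Or.inl ⟨⟨hab, h.1⟩, ⟨huv, h.2⟩, hdis⟩), rfl⟩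
    · rintro ⟨z, hz, rfl⟩
      obtain ⟨h1, h2, h3, h4⟩ := hXm z hz
      refine ⟨Set.sdiff_subset, ?_⟩
      have hne := edge_ne hT h1 h3 (by omega)
      rw [sizes_two_edges hT h1 h2 hne h3]
      have key : ∀ x y w p q r : ℕ, (x = r ∧ y = q ∧ w = p) ∨ (x = r ∧ y = p ∧ w = q) ∨
          (x = q ∧ y = p ∧ w = r) → ({x, y, w} : Multiset ℕ) = {p, q, r} := by
        rintro x y w p q r (⟨rfl, rfl, rfl⟩ | ⟨rfl, rfl, rfl⟩ | ⟨rfl, rfl, rfl⟩)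
        · ext k
          simp only [Multiset.insert_eq_cons, Multiset.count_cons, Multiset.count_singleton]
          omega
        · ext k
          simp only [Multiset.insert_eq_cons, Multiset.count_cons, Multiset.count_singleton]
          omega
        · ext k
          simp only [Multiset.insert_eq_cons, Multiset.count_cons, Multiset.count_singleton]
          omega
      apply key
      omega
  rw [this, Set.InjOn.ncard_image]
  rintro ⟨⟨a, b⟩, ⟨u, v⟩⟩ hz ⟨⟨a', b'⟩, ⟨u', v'⟩⟩ hz' h
  obtain ⟨h1, h2, h3, h4⟩ := hXm _ hz
  obtain ⟨h1', h2', hdj', h4'⟩ := hXm _ hz'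
  simp only at h1 h2 h3 h4 h1' h2' hdj' h4' h
  have hne := edge_ne hT h1 h3 (by omega)
  have hh := diff_inj (by
    rintro x (rfl | rfl)
    · exact h1
    · exact h2) (by
    rintro x (rfl | rfl)
    · exact h1'
    · exact h2') h
  obtain ⟨o1, o2⟩ := orient_unique hT h1 h2 hne h3
  obtain ⟨o3, o4⟩ := orient_unique hT h2 h1 hne.symm h3.symm
  rw [Set.pair_eq_pair_iff] at hh
  rcases hh with ⟨e1, e2⟩ | ⟨e1, e2⟩
  · rcases Sym2.eq_iff.1 e1 with ⟨rfl, rfl⟩ | ⟨rfl, rfl⟩ <;>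
    rcases Sym2.eq_iff.1 e2 with ⟨rfl, rfl⟩ | ⟨rfl, rfl⟩
    · rfl
    · exact absurd hdj'.symm o3
    · exact absurd hdj' o1
    · exact absurd hdj' o2
  · exfalso
    rcases Sym2.eq_iff.1 e1 with ⟨rfl, rfl⟩ | ⟨rfl, rfl⟩ <;>
    rcases Sym2.eq_iff.1 e2 with ⟨rfl, rfl⟩ | ⟨rfl, rfl⟩
    · omega
    · exact o3 hdj'
    · exact o1 hdj'.symm
    · exact o2 hdj'.symm

/-- The pairs with a branch of order `d - n` become nested pairs. -/
lemma NN_swap (hT : T.IsTree) (i n : ℕ) (hd : n < Fintype.card V) :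
    (NN T i (Fintype.card V - n)).ncard =
      {z : (V × V) × (V × V) | z.2 ∈ Dk T n ∧
        (z.1 ∈ Dk T i ∧ Br T z.1.1 z.1.2 ⊆ Br T z.2.1 z.2.2)}.ncard := by
  have hinj : Function.Injective
      (Prod.map id Prod.swap : (V × V) × (V × V) → (V × V) × (V × V)) :=
    Function.injective_id.prodMap Prod.swap_injective
  rw [← Set.ncard_image_of_injective _ hinj]
  congr 1
  ext ⟨p, ⟨x, y⟩⟩
  simp only [Set.mem_image, Set.mem_ofPred_eq, NN, Dk]
  constructor
  · rintro ⟨⟨p', ⟨y', x'⟩⟩, ⟨h1, h2, h3⟩, h4⟩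
    simp only [Prod.map, id, Prod.swap, Prod.mk.injEq] at h4 h1 h2 h3
    obtain ⟨rfl, rfl, rfl⟩ := h4
    have := ncard_swap hT h2.1
    refine ⟨⟨h2.1.symm, by omega⟩, h1, ?_⟩
    rw [← Br_compl hT h2.1]
    exact Set.subset_compl_iff_disjoint_right.2 h3
  · rintro ⟨h1, h2, h3⟩
    refine ⟨(p, (y, x)), ⟨h2, ⟨h1.1.symm, ?_⟩, ?_⟩, rfl⟩
    · have := ncard_swap hT h1.1
      simp only
      omega
    · simp only
      rw [← Br_compl hT h1.1]
      exact Set.disjoint_compl_right_iff_subset.2 h3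

lemma count_pairs {α : Type} [Finite α] (D P Q : Set α) (R : α → α → Prop) (i j : ℤ)
    (hD : D = P ∪ Q) (hPQ : Disjoint P Q)
    (hP : ∀ q ∈ P, (({p | R p q}.ncard : ℕ) : ℤ) = i)
    (hQ : ∀ q ∈ Q, (({p | R p q}.ncard : ℕ) : ℤ) = j) :
    (({z : α × α | z.2 ∈ D ∧ R z.1 z.2}.ncard : ℕ) : ℤ) = i * P.ncard + j * Q.ncard := by
  classical
  have : Fintype α := Fintype.ofFinite α
  have aux : ∀ (P : Set α) (i : ℤ), (∀ q ∈ P, (({p | R p q}.ncard : ℕ) : ℤ) = i) →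
      (({z : α × α | z.2 ∈ P ∧ R z.1 z.2}.ncard : ℕ) : ℤ) = i * P.ncard := by
    intro P i hP
    rw [Set.ncard_eq_toFinset_card', Finset.card_eq_sum_card_fiberwise
      (f := Prod.snd) (t := P.toFinset)]
    · push_cast
      rw [Finset.sum_congr rfl (g := fun _ => i)]
      · rw [Set.ncard_eq_toFinset_card' P]
        simp [mul_comm]
      · intro q hq
        rw [← hP q (by simpa using hq), Set.ncard_eq_toFinset_card']
        norm_cast
        symm
        apply Finset.card_bij (fun p _ => (p, q))
        · intro a ha
          simp only [Set.mem_toFinset] at hq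
          simpa [hq] using ha
        · intro a _ b _ h
          simpa using h
        · rintro ⟨a, b⟩ hb
          simp only [Finset.mem_filter, Set.mem_toFinset, Set.mem_ofPred_eq] at hb
          obtain ⟨⟨h1, h2⟩, rfl⟩ := hb
          exact ⟨a, by simpa using h2, rfl⟩
    · intro z hz
      simp only [Set.coe_toFinset, Set.mem_ofPred_eq] at hz ⊢
      exact hz.1
  have hU : {z : α × α | z.2 ∈ D ∧ R z.1 z.2} =
      {z : α × α | z.2 ∈ P ∧ R z.1 z.2} ∪ {z : α × α | z.2 ∈ Q ∧ R z.1 z.2} := by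
    ext z
    simp only [hD, Set.mem_union, Set.mem_ofPred_eq]
    tauto
  rw [hU, Set.ncard_union_eq, Nat.cast_add, aux P i hP, aux Q j hQ]
  rw [Set.disjoint_left] at hPQ ⊢
  intro z h1 h2
  exact hPQ h1.1 h2.1

end

/-! ### Rooted subtrees as embeddings -/

/-- The branch at the dart `q` is an isomorphic copy of `R`, rooted at `r`. -/
def Emb {V W : Type} (T : SimpleGraph V) (R : SimpleGraph W) (r : W) (q : V × V) : Prop :=
  T.Adj q.1 q.2 ∧ ∃ f : W → V, Function.Injective f ∧ (∀ i j, T.Adj (f i) (f j) ↔ R.Adj i j) ∧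
    Set.range f = Br T q.1 q.2 ∧ f r = q.2

section
variable {V W : Type} {T : SimpleGraph V} {R : SimpleGraph W} {r : W}

lemma rooted_iff (hT : T.IsTree) (u v : V) :
    IsRootedSubtree T s(u, v) v R r ↔ Emb T R r (u, v) := by
  unfold IsRootedSubtree Emb
  constructor
  · rintro ⟨he, -, φ, hφ⟩
    have huv : T.Adj u v := he
    refine ⟨huv, fun i => (φ i : V), ?_, ?_, ?_, hφ⟩
    · exact Subtype.val_injective.comp φ.injective
    · intro i j
      rw [← φ.map_adj_iff]
      simp only [SimpleGraph.comap_adj, Function.Embedding.subtype_apply,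
        SimpleGraph.deleteEdges_adj, Set.mem_singleton_iff]
      constructor
      · intro h
        refine ⟨h, fun hh => ?_⟩
        have h1 : u ∈ s((φ i : V), (φ j : V)) := by rw [hh]; simp
        rw [Sym2.mem_iff] at h1
        have hi : (φ i : V) ∈ Br T u v := (φ i).2
        have hj : (φ j : V) ∈ Br T u v := (φ j).2
        apply not_mem_Br hT huv
        rcases h1 with h1 | h1
        · rwa [← h1] at hi
        · rwa [← h1] at hj
      · exact fun h => h.1
    · ext x
      constructor
      · rintro ⟨i, rfl⟩
        exact (φ i).2
      · intro hx
        exact ⟨φ.symm ⟨x, hx⟩, by simp⟩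
  · rintro ⟨huv, f, hf, hadj, hr, hfr⟩
    simp only at huv hr hfr
    refine ⟨huv, by simp, ?_⟩
    have hm : ∀ i, f i ∈ Br T u v := fun i => hr ▸ Set.mem_range_self i
    let e : W ≃ ((T.deleteEdges {s(u, v)}).connectedComponentMk v).supp :=
      Equiv.ofBijective (fun i => ⟨f i, hm i⟩) ⟨fun i j h => hf (congrArg Subtype.val h), by
        rintro ⟨x, hx⟩
        have hx' : x ∈ Br T u v := hx
        rw [← hr] at hx'
        obtain ⟨i, rfl⟩ := hx'
        exact ⟨i, rfl⟩⟩
    refine ⟨⟨e, ?_⟩, hfr⟩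
    intro i j
    rw [← hadj]
    change (T.deleteEdges {s(u, v)}).Adj (f i) (f j) ↔ _
    simp only [SimpleGraph.deleteEdges_adj, Set.mem_singleton_iff]
    constructor
    · exact fun h => h.1
    · intro h
      refine ⟨h, fun hh => ?_⟩
      have h1 : u ∈ s(f i, f j) := by rw [hh]; simp
      rw [Sym2.mem_iff] at h1
      have hi := hm i
      have hj := hm j
      apply not_mem_Br hT huv
      rcases h1 with h1 | h1
      · rwa [← h1] at hi
      · rwa [← h1] at hj

lemma rho_eq [Fintype V] (hT : T.IsTree) : rho T R r = {q | Emb T R r q}.ncard := by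
  unfold rho
  have : {p : Sym2 V × V | IsRootedSubtree T p.1 p.2 R r} =
      (fun q : V × V => (s(q.1, q.2), q.2)) '' {q | Emb T R r q} := by
    ext ⟨e, v⟩
    simp only [Set.mem_ofPred_eq, Set.mem_image]
    constructor
    · intro h
      obtain ⟨u, hu⟩ := Sym2.mem_iff_exists.1 h.2.1
      rw [Sym2.eq_swap] at hu
      subst hu
      exact ⟨(u, v), (rooted_iff hT u v).1 h, rfl⟩
    · rintro ⟨⟨u, w⟩, h, he⟩
      simp only [Prod.mk.injEq] at he
      obtain ⟨rfl, rfl⟩ := he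
      exact (rooted_iff hT u w).2 h
  rw [this, Set.InjOn.ncard_image]
  rintro ⟨a, b⟩ - ⟨c, e⟩ - h
  simp only [Prod.mk.injEq] at h
  obtain ⟨h1, rfl⟩ := h
  rw [Sym2.congr_left] at h1
  rw [h1]

lemma Emb_ncard {k : ℕ} {R : SimpleGraph (Fin k)} {r : Fin k} {q : V × V}
    (h : Emb T R r q) : q ∈ Dk T k := by
  obtain ⟨h1, f, hf, -, hr, -⟩ := h
  refine ⟨h1, ?_⟩
  rw [← hr, ← Set.image_univ, Set.ncard_image_of_injective _ hf, Set.ncard_univ]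
  simp

lemma mem_D1_iff [Fintype V] (hT : T.IsTree) (p : V × V) :
    p ∈ Dk T 1 ↔ T.Adj p.1 p.2 ∧ ∀ z, T.Adj p.2 z → z = p.1 := by
  constructor
  · rintro ⟨h1, h2⟩
    refine ⟨h1, fun z hz => ?_⟩
    obtain ⟨w, hw⟩ := Set.ncard_eq_one.1 h2
    have hm := self_mem_Br (T := T) p.1 p.2
    rw [hw, Set.mem_singleton_iff] at hm
    refine (crossT hT h1 hz (self_mem_Br _ _) ?_).2
    rw [hw, Set.mem_singleton_iff, ← hm]
    exact hz.ne'
  · rintro ⟨h1, h2⟩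
    refine ⟨h1, ?_⟩
    rw [← Br_unique hT h1 {p.2}, Set.ncard_singleton]
    · simp
    · simpa using h1.ne
    · rintro x y hxy hx -
      rw [Set.mem_singleton_iff] at hx
      subst hx
      exact ⟨rfl, h2 y hxy⟩

lemma D1_Br [Fintype V] {p : V × V} (h : p ∈ Dk T 1) : Br T p.1 p.2 = {p.2} := by
  obtain ⟨w, hw⟩ := Set.ncard_eq_one.1 h.2
  have hm := self_mem_Br (T := T) p.1 p.2
  rw [hw, Set.mem_singleton_iff] at hm
  rw [hw, hm]

/-- Number of leaf darts inside a branch. -/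
lemma leaf_count [Fintype V] (hT : T.IsTree) {q : V × V} (h : Emb T R r q)
    (hr : ∃ j, R.Adj r j) :
    {p | p ∈ Dk T 1 ∧ Br T p.1 p.2 ⊆ Br T q.1 q.2}.ncard =
      {z : W × W | z.2 ≠ r ∧ R.Adj z.1 z.2 ∧ ∀ l, R.Adj z.2 l → l = z.1}.ncard := by
  obtain ⟨hq, f, hf, hadj, hrange, hfr⟩ := h
  have hinj : Function.Injective (Prod.map f f) := hf.prodMap hf
  rw [← Set.ncard_image_of_injective _ hinj]
  congr 1
  have hm : ∀ i, f i ∈ Br T q.1 q.2 := fun i => hrange ▸ Set.mem_range_self i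
  have hnb : ∀ i z, i ≠ r → T.Adj (f i) z → ∃ j, f j = z ∧ R.Adj i j := by
    intro i z hi hz
    have : z ∈ Br T q.1 q.2 := by
      by_contra hz'
      have := (crossT hT hq hz (hm i) hz').1
      rw [← hfr] at this
      exact hi (hf this)
    rw [← hrange] at this
    obtain ⟨j, rfl⟩ := this
    exact ⟨j, rfl, (hadj i j).1 hz⟩
  ext ⟨x, w⟩
  simp only [Set.mem_ofPred_eq, Set.mem_image, Prod.exists, Prod.map, Prod.mk.injEq]
  constructor
  · rintro ⟨h1, h2⟩
    rw [D1_Br h1, Set.singleton_subset_iff, ← hrange] at h2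
    rw [mem_D1_iff hT] at h1
    obtain ⟨i, hi⟩ := h2
    simp only at hi h1
    subst hi
    have hir : i ≠ r := by
      rintro rfl
      obtain ⟨j, hj⟩ := hr
      have e1 := h1.2 _ ((hadj i j).2 hj)
      have e2 := h1.2 q.1 (by rw [hfr]; exact hq.symm)
      have hmj := hm j
      rw [e1, ← e2] at hmj
      exact not_mem_Br hT hq hmj
    obtain ⟨j, rfl, hj⟩ := hnb i x hir h1.1.symm
    refine ⟨j, i, ⟨hir, hj.symm, fun l hl => ?_⟩, rfl, rfl⟩
    exact hf (h1.2 _ ((hadj i l).2 hl))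
  · rintro ⟨j, i, ⟨hir, hji, hl⟩, rfl, rfl⟩
    have h1 : (f j, f i) ∈ Dk T 1 := by
      rw [mem_D1_iff hT]
      refine ⟨(hadj j i).2 hji, fun z hz => ?_⟩
      obtain ⟨l, rfl, hil⟩ := hnb i z hir hz
      rw [hl l hil]
    refine ⟨h1, ?_⟩
    rw [D1_Br h1, Set.singleton_subset_iff]
    exact hm i

/-- Number of sub-branches that miss exactly the root. -/
lemma child_count [Fintype V] (hT : T.IsTree) {n : ℕ} {q : V × V} (h : Emb T R r q)
    (hn : 1 ≤ n) (hq : q ∈ Dk T n) (j : W) (hj : ∀ i, R.Adj r i ↔ i = j) :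
    {p | p ∈ Dk T (n - 1) ∧ Br T p.1 p.2 ⊆ Br T q.1 q.2}.ncard = 1 := by
  obtain ⟨hqa, f, hf, hadj, hrange, hfr⟩ := h
  have hm : ∀ i, f i ∈ Br T q.1 q.2 := fun i => hrange ▸ Set.mem_range_self i
  have hc : T.Adj q.2 (f j) := by rw [← hfr, hadj, hj]
  have hS : Br T q.1 q.2 \ {q.2} = Br T q.2 (f j) := by
    apply Br_unique hT hc
    · exact ⟨hm j, by simpa using hc.ne'⟩
    · simp
    · rintro x y hxy ⟨hx1, hx2⟩ hy
      rw [Set.mem_singleton_iff] at hx2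
      have hyB : y ∈ Br T q.1 q.2 := by
        by_contra hy'
        exact hx2 (crossT hT hqa hxy hx1 hy').1
      have hyq : y = q.2 := by
        by_contra hy'
        exact hy ⟨hyB, hy'⟩
      subst hyq
      rw [← hrange] at hx1
      obtain ⟨i, rfl⟩ := hx1
      rw [← hfr] at hxy
      exact ⟨by rw [(hj i).1 ((hadj _ _).1 hxy.symm)], rfl⟩
  have hSc : (Br T q.2 (f j)).ncard = n - 1 := by
    rw [← hS, Set.ncard_sdiff_singleton_of_mem (self_mem_Br _ _), hq.2]
  rw [Set.ncard_eq_one]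
  refine ⟨(q.2, f j), ?_⟩
  ext ⟨x, y⟩
  simp only [Set.mem_ofPred_eq, Set.mem_singleton_iff, Prod.mk.injEq]
  constructor
  · rintro ⟨⟨hxy, hk⟩, hsub⟩
    simp only at hxy hk hsub
    have hx := not_mem_Br hT hxy
    have hy := self_mem_Br (T := T) x y
    have hroot : q.2 ∉ Br T x y := by
      intro hr'
      have := crossT hT hxy hqa.symm hr' (fun h' => not_mem_Br hT hqa (hsub h'))
      obtain ⟨rfl, rfl⟩ := this
      have := hq.2
      omega
    have heq : Br T x y = Br T q.1 q.2 \ {q.2} := by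
      apply Set.eq_of_subset_of_ncard_le
      · intro z hz
        exact ⟨hsub hz, fun h' => hroot (by rw [Set.mem_singleton_iff] at h'; rwa [← h'])⟩
      · rw [hS, hSc, hk]
      · exact Set.toFinite _
    rw [hS] at heq
    rw [heq] at hx hy
    obtain ⟨e1, e2⟩ := crossT hT hc hxy.symm hy hx
    exact ⟨e2, e1⟩
  · rintro ⟨rfl, rfl⟩
    refine ⟨⟨hc, hSc⟩, ?_⟩
    rw [← hS]
    exact Set.sdiff_subset

end

/-! ### The two families of rooted trees -/

lemma Rtwo_adj {n : ℕ} (i j : Fin n) : (Rtwo n).Adj i j ↔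
    i.val ≠ j.val ∧
    (((j.val = i.val + 1 ∧ j.val ≤ n - 2) ∨ (i.val = n - 3 ∧ j.val = n - 1)) ∨
      ((i.val = j.val + 1 ∧ i.val ≤ n - 2) ∨ (j.val = n - 3 ∧ i.val = n - 1))) := by
  unfold Rtwo
  rw [SimpleGraph.fromRel_adj, ne_eq, Fin.ext_iff]

lemma path_leaves (k : ℕ) (hk : 3 ≤ k) :
    {z : Fin k × Fin k | z.2 ≠ (⟨0, by omega⟩ : Fin k) ∧ (SimpleGraph.pathGraph k).Adj z.1 z.2 ∧
      ∀ l, (SimpleGraph.pathGraph k).Adj z.2 l → l = z.1}.ncard = 1 := by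
  rw [Set.ncard_eq_one]
  refine ⟨(⟨k - 2, by omega⟩, ⟨k - 1, by omega⟩), ?_⟩
  ext ⟨⟨a, ha⟩, ⟨b, hb⟩⟩
  simp only [Set.mem_ofPred_eq, SimpleGraph.pathGraph_adj, Set.mem_singleton_iff, Prod.mk.injEq,
    Fin.mk.injEq, ne_eq]
  constructor
  · rintro ⟨h1, h2, h3⟩
    by_cases hbk : b = k - 1
    · omega
    · have e1 := h3 ⟨b + 1, by omega⟩ (Or.inl rfl)
      have e2 := h3 ⟨b - 1, by omega⟩ (Or.inr (by simp only; omega))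
      simp only [Fin.mk.injEq] at e1 e2
      omega
  · rintro ⟨rfl, rfl⟩
    refine ⟨by omega, by omega, ?_⟩
    rintro ⟨l, hl⟩ h
    simp only [Fin.mk.injEq] at h ⊢
    omega

lemma Rtwo_leaves (k : ℕ) (hk : 3 ≤ k) :
    {z : Fin k × Fin k | z.2 ≠ (⟨0, by omega⟩ : Fin k) ∧ (Rtwo k).Adj z.1 z.2 ∧
      ∀ l, (Rtwo k).Adj z.2 l → l = z.1}.ncard = 2 := by
  rw [Set.ncard_eq_two]
  refine ⟨(⟨k - 3, by omega⟩, ⟨k - 2, by omega⟩), (⟨k - 3, by omega⟩, ⟨k - 1, by omega⟩), ?_, ?_⟩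
  · simp only [ne_eq, Prod.mk.injEq, Fin.mk.injEq]
    omega
  ext ⟨⟨a, ha⟩, ⟨b, hb⟩⟩
  simp only [Set.mem_ofPred_eq, Rtwo_adj, Set.mem_insert_iff, Set.mem_singleton_iff,
    Prod.mk.injEq, Fin.mk.injEq, ne_eq]
  constructor
  · rintro ⟨h1, h2, h3⟩
    by_cases hbk : b = k - 1
    · omega
    by_cases hbk : b = k - 2
    · omega
    · have e1 := h3 ⟨b + 1, by omega⟩ ⟨by simp, Or.inl (Or.inl ⟨rfl, by simp only; omega⟩)⟩
      have e2 := h3 ⟨b - 1, by omega⟩ ⟨by simp only; omega,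
        Or.inr (Or.inl ⟨by simp only; omega, by omega⟩)⟩
      simp only [Fin.mk.injEq] at e1 e2
      omega
  · rintro (⟨rfl, rfl⟩ | ⟨rfl, rfl⟩)
    · refine ⟨by omega, by omega, ?_⟩
      rintro ⟨l, hl⟩ h
      simp only [Fin.mk.injEq] at h ⊢
      omega
    · refine ⟨by omega, by omega, ?_⟩
      rintro ⟨l, hl⟩ h
      simp only [Fin.mk.injEq] at h ⊢
      omega

/-! ### Branches of a 2-spider -/
section
variable {V W : Type} {T : SimpleGraph V} {R : SimpleGraph W} {r : W}

lemma Br_image (hT : T.IsTree) {t u : V} (htu : T.Adj t u) {f : W → V}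
    (hf : Function.Injective f)
    (hadj : ∀ i j, T.Adj (f i) (f j) ↔ R.Adj i j) (hrange : Set.range f = Br T t u)
    (hfr : f r = u) (A : Set W) (i j : W) (hr : r ∉ A) (hi : i ∈ A) (hj : j ∉ A)
    (hji : R.Adj j i) (hA : ∀ a b, R.Adj a b → a ∈ A → b ∉ A → a = i ∧ b = j) :
    f '' A = Br T (f j) (f i) := by
  have hm : ∀ i, f i ∈ Br T t u := fun i => hrange ▸ Set.mem_range_self i
  apply Br_unique hT ((hadj j i).2 hji)
  · exact ⟨i, hi, rfl⟩
  · rintro ⟨l, hl, he⟩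
    exact hj (hf he ▸ hl)
  · rintro x y hxy ⟨l, hl, rfl⟩ hy
    have hyB : y ∈ Br T t u := by
      by_contra hy'
      have := (crossT hT htu hxy (hm l) hy').1
      rw [← hfr] at this
      exact hr (hf this ▸ hl)
    rw [← hrange] at hyB
    obtain ⟨b, rfl⟩ := hyB
    obtain ⟨rfl, rfl⟩ := hA l b ((hadj _ _).1 hxy) hl (fun hb => hy ⟨b, hb, rfl⟩)
    exact ⟨rfl, rfl⟩

lemma torso_mem (hT : T.IsTree) {t u : V} (htu : T.Adj t u) {f : W → V}
    (hf : Function.Injective f)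
    (hadj : ∀ i j, T.Adj (f i) (f j) ↔ R.Adj i j) (hrange : Set.range f = Br T t u)
    (hfr : f r = u) (A : Set W) (i j : W) (hr : r ∉ A) (hi : i ∈ A) (hj : j ∉ A)
    (hji : R.Adj j i) (hA : ∀ a b, R.Adj a b → a ∈ A → b ∉ A → a = i ∧ b = j) :
    t ∈ Br T (f i) (f j) := by
  rw [mem_Br_swap hT ((hadj j i).2 hji), ← Br_image hT htu hf hadj hrange hfr A i j hr hi hj hji hA]
  rintro ⟨l, -, hl⟩
  apply not_mem_Br hT htu
  rw [← hrange]
  exact ⟨l, hl⟩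

lemma sub_path (hT : T.IsTree) {t u x y : V} {m : ℕ} {h0 : 0 < m}
    (h : Emb T (SimpleGraph.pathGraph m) ⟨0, h0⟩ (t, u)) (hxy : T.Adj x y)
    (ht : t ∉ Br T x y) (hx : x ∈ Br T t u) (hy : y ∈ Br T t u) :
    ∃ (m' : ℕ) (h' : 0 < m'), Emb T (SimpleGraph.pathGraph m') ⟨0, h'⟩ (x, y) := by
  obtain ⟨htu, f, hf, hadj, hrange, hfr⟩ := h
  simp only at htu hrange hfr
  rw [← hrange] at hx hy
  obtain ⟨⟨j, hj⟩, rfl⟩ := hx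
  obtain ⟨⟨i, hi⟩, rfl⟩ := hy
  have hji := (hadj _ _).1 hxy
  have hji' := hji
  rw [SimpleGraph.pathGraph_adj] at hji'
  simp only at hji'
  rcases hji' with hji' | hji'
  · have hB := Br_image hT htu hf hadj hrange hfr {l | i ≤ l.val} ⟨i, hi⟩ ⟨j, hj⟩
      (by simp only [Set.mem_ofPred_eq]; omega) (by simp) (by simp only [Set.mem_ofPred_eq]; omega)
      hji (by
        rintro ⟨a, ha⟩ ⟨b, hb⟩ hab h1 h2
        simp only [Set.mem_ofPred_eq, SimpleGraph.pathGraph_adj, Fin.mk.injEq] at hab h1 h2 ⊢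
        omega)
    refine ⟨m - i, by omega, hxy, fun l => f ⟨l.val + i, by omega⟩, ?_, ?_, ?_, ?_⟩
    · intro a b hab
      have := hf hab
      simp only [Fin.mk.injEq] at this
      exact Fin.ext (by omega)
    · intro a b
      rw [hadj, SimpleGraph.pathGraph_adj, SimpleGraph.pathGraph_adj]
      simp only
      omega
    · simp only
      rw [← hB]
      ext z
      simp only [Set.mem_range, Set.mem_image, Set.mem_ofPred_eq]
      constructor
      · rintro ⟨l, rfl⟩
        exact ⟨_, by simp, rfl⟩
      · rintro ⟨l, hl, rfl⟩
        refine ⟨⟨l.val - i, by omega⟩, ?_⟩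
        congr 1
        exact Fin.ext (by simp only; omega)
    · simp
  · exfalso
    apply ht
    refine torso_mem hT htu hf hadj hrange hfr {l | j ≤ l.val} ⟨j, hj⟩ ⟨i, hi⟩
      (by simp only [Set.mem_ofPred_eq]; omega) (by simp) (by simp only [Set.mem_ofPred_eq]; omega)
      hji.symm (by
        rintro ⟨a, ha⟩ ⟨b, hb⟩ hab h1 h2
        simp only [Set.mem_ofPred_eq, SimpleGraph.pathGraph_adj, Fin.mk.injEq] at hab h1 h2 ⊢
        omega)

lemma sub_Rtwo (hT : T.IsTree) {t u x y : V} {m : ℕ} {h0 : 3 ≤ m}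
    (h : Emb T (Rtwo m) ⟨0, by omega⟩ (t, u)) (hxy : T.Adj x y)
    (ht : t ∉ Br T x y) (hx : x ∈ Br T t u) (hy : y ∈ Br T t u)
    (hc : (Br T x y).ncard ≠ 1) :
    ∃ (m' : ℕ) (h' : 3 ≤ m'), Emb T (Rtwo m') ⟨0, by omega⟩ (x, y) := by
  obtain ⟨htu, f, hf, hadj, hrange, hfr⟩ := h
  simp only at htu hrange hfr
  rw [← hrange] at hx hy
  obtain ⟨⟨j, hj⟩, rfl⟩ := hx
  obtain ⟨⟨i, hi⟩, rfl⟩ := hy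
  have hji := (hadj _ _).1 hxy
  have hji' := hji
  rw [Rtwo_adj] at hji'
  simp only at hji'
  have hend : ∀ i j : Fin m, (Rtwo m).Adj j i → m - 2 ≤ i.val → j.val < m - 2 →
      f '' {i} = Br T (f j) (f i) ∧ t ∈ Br T (f i) (f j) := by
    intro i j hji hi hj
    have e1 : (⟨0, by omega⟩ : Fin m) ∉ ({i} : Set (Fin m)) := by
      rw [Set.mem_singleton_iff, Fin.ext_iff]; simp only; omega
    have e2 : j ∉ ({i} : Set (Fin m)) := by
      rw [Set.mem_singleton_iff, Fin.ext_iff]; omega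
    have e3 : ∀ a b, (Rtwo m).Adj a b → a ∈ ({i} : Set (Fin m)) → b ∉ ({i} : Set (Fin m)) →
        a = i ∧ b = j := by
      intro a b hab ha _
      rw [Set.mem_singleton_iff] at ha
      subst ha
      refine ⟨rfl, ?_⟩
      rw [Rtwo_adj] at hab hji
      rw [Fin.ext_iff]
      omega
    exact ⟨Br_image hT htu hf hadj hrange hfr {i} i j e1 rfl e2 hji e3,
      torso_mem hT htu hf hadj hrange hfr {i} i j e1 rfl e2 hji e3⟩
  by_cases him : m - 2 ≤ i
  · exfalso
    obtain ⟨h1, -⟩ := hend ⟨i, hi⟩ ⟨j, hj⟩ hji him (by simp only; omega)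
    apply hc
    rw [← h1, Set.image_singleton, Set.ncard_singleton]
  by_cases hjm : m - 2 ≤ j
  · exfalso
    exact ht (hend ⟨j, hj⟩ ⟨i, hi⟩ hji.symm hjm (by simp only; omega)).2
  have hji2 : i = j + 1 ∨ j = i + 1 := by omega
  rcases hji2 with hji2 | hji2
  · have hB := Br_image hT htu hf hadj hrange hfr {l | i ≤ l.val} ⟨i, hi⟩ ⟨j, hj⟩
      (by simp only [Set.mem_ofPred_eq]; omega) (by simp) (by simp only [Set.mem_ofPred_eq]; omega)
      hji (by
        rintro ⟨a, ha⟩ ⟨b, hb⟩ hab h1 h2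
        simp only [Set.mem_ofPred_eq, Rtwo_adj, Fin.mk.injEq] at hab h1 h2 ⊢
        omega)
    refine ⟨m - i, by omega, hxy, fun l => f ⟨l.val + i, by omega⟩, ?_, ?_, ?_, ?_⟩
    · intro a b hab
      have := hf hab
      simp only [Fin.mk.injEq] at this
      exact Fin.ext (by omega)
    · rintro ⟨a, ha⟩ ⟨b, hb⟩
      rw [hadj, Rtwo_adj, Rtwo_adj]
      simp only
      omega
    · simp only
      rw [← hB]
      ext z
      simp only [Set.mem_range, Set.mem_image, Set.mem_ofPred_eq]
      constructor
      · rintro ⟨l, rfl⟩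
        exact ⟨_, by simp, rfl⟩
      · rintro ⟨l, hl, rfl⟩
        refine ⟨⟨l.val - i, by omega⟩, ?_⟩
        congr 1
        exact Fin.ext (by simp only; omega)
    · simp
  · exfalso
    apply ht
    refine torso_mem hT htu hf hadj hrange hfr {l | j ≤ l.val} ⟨j, hj⟩ ⟨i, hi⟩
      (by simp only [Set.mem_ofPred_eq]; omega) (by simp) (by simp only [Set.mem_ofPred_eq]; omega)
      hji.symm (by
        rintro ⟨a, ha⟩ ⟨b, hb⟩ hab h1 h2
        simp only [Set.mem_ofPred_eq, Rtwo_adj, Fin.mk.injEq] at hab h1 h2 ⊢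
        omega)

lemma exists_leg (hT : T.IsTree) (t z : V) (hz : z ≠ t) : ∃ u, T.Adj t u ∧ z ∈ Br T t u := by
  have := closed_univ hT {z | z = t ∨ ∃ u, T.Adj t u ∧ z ∈ Br T t u} ⟨t, Or.inl rfl⟩ (by
    intro x y hxy hx
    rcases hx with rfl | ⟨u, hu, hx⟩
    · exact Or.inr ⟨y, hxy, self_mem_Br _ _⟩
    · by_cases hy : y ∈ Br T t u
      · exact Or.inr ⟨u, hu, hy⟩
      · exact Or.inl (crossT hT hu hxy hx hy).2)
  have hz' : z ∈ {z | z = t ∨ ∃ u, T.Adj t u ∧ z ∈ Br T t u} := by rw [this]; trivial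
  exact hz'.resolve_left hz

lemma structure_lemma [Fintype V] {t : V} (hsp : IsTwoSpiderWithTorso T t)
    (hshort : ∀ u : V, T.Adj t u → 2 * legOrder T t u ≤ Fintype.card V) (k : ℕ) (hk : 3 ≤ k)
    (hkd : 2 * k < Fintype.card V) {q : V × V} (hq : q ∈ Dk T k) :
    Emb T (SimpleGraph.pathGraph k) ⟨0, by omega⟩ q ∨ Emb T (Rtwo k) ⟨0, by omega⟩ q := by
  obtain ⟨hT, -, hlegs⟩ := hsp
  obtain ⟨x, y⟩ := q
  obtain ⟨hxy, hc⟩ := id hq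
  simp only at hxy hc
  have ht : t ∉ Br T x y := by
    intro ht
    have ht' : t ∉ Br T y x := by rw [mem_Br_swap hT hxy]; simpa
    have hxt : x ≠ t := by
      rintro rfl
      exact not_mem_Br hT hxy ht
    obtain ⟨u, hu, hxu⟩ := exists_leg hT t x hxt
    have hsub := Set.ncard_le_ncard (Br_nested hT hxy.symm hu hxu ht')
    have h1 : 2 * (Br T t u).ncard ≤ Fintype.card V := hshort u hu
    have h2 := ncard_swap hT hxy
    omega
  have hyt : y ≠ t := by
    rintro rfl
    exact ht (self_mem_Br _ _)
  obtain ⟨u, hu, hyu⟩ := exists_leg hT t y hyt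
  have main : (∃ (m' : ℕ) (h' : 0 < m'), Emb T (SimpleGraph.pathGraph m') ⟨0, h'⟩ (x, y)) ∨
      (∃ (m' : ℕ) (h' : 3 ≤ m'), Emb T (Rtwo m') ⟨0, by omega⟩ (x, y)) := by
    by_cases hxu : x ∈ Br T t u
    · rcases hlegs u hu with ⟨m, h0, h⟩ | ⟨m, h0, h⟩
      · exact Or.inl (sub_path hT ((rooted_iff hT t u).1 h) hxy ht hxu hyu)
      · exact Or.inr (sub_Rtwo hT (h0 := h0) ((rooted_iff hT t u).1 h) hxy ht hxu hyu (by omega))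
    · obtain ⟨rfl, rfl⟩ := crossT hT hu hxy.symm hyu hxu
      rcases hlegs y hu with ⟨m, h0, h⟩ | ⟨m, h0, h⟩
      · exact Or.inl ⟨m, h0, (rooted_iff hT x y).1 h⟩
      · exact Or.inr ⟨m, h0, (rooted_iff hT x y).1 h⟩
  rcases main with ⟨m, h0, h⟩ | ⟨m, h0, h⟩
  · have hm := (Emb_ncard h).2
    simp only at hm
    obtain rfl : m = k := by omega
    exact Or.inl h
  · have hm := (Emb_ncard h).2
    simp only at hm
    obtain rfl : m = k := by omega
    exact Or.inr h

lemma path_count [Fintype V] (hT : T.IsTree) (k : ℕ) (hk : 3 ≤ k) {q : V × V}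
    (h : Emb T (SimpleGraph.pathGraph k) ⟨0, by omega⟩ q) :
    {p | p ∈ Dk T 1 ∧ Br T p.1 p.2 ⊆ Br T q.1 q.2}.ncard = 1 := by
  rw [leaf_count hT h ⟨⟨1, by omega⟩, by rw [SimpleGraph.pathGraph_adj]; simp⟩]
  exact path_leaves k hk

lemma Rtwo_count [Fintype V] (hT : T.IsTree) (k : ℕ) (hk : 3 ≤ k) {q : V × V}
    (h : Emb T (Rtwo k) ⟨0, by omega⟩ q) :
    {p | p ∈ Dk T 1 ∧ Br T p.1 p.2 ⊆ Br T q.1 q.2}.ncard = 2 := by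
  rw [leaf_count hT h ⟨⟨1, by omega⟩, by
    rw [Rtwo_adj]
    exact ⟨by simp, Or.inl (Or.inl ⟨by simp, by simp only; omega⟩)⟩⟩]
  exact Rtwo_leaves k hk

lemma outside_count [Fintype V] (q : V × V) (l : ℕ)
    (h : {p | p ∈ Dk T 1 ∧ Br T p.1 p.2 ⊆ Br T q.1 q.2}.ncard = l) :
    (({p | p ∈ Dk T 1 ∧ Disjoint (Br T p.1 p.2) (Br T q.1 q.2)}.ncard : ℕ) : ℤ) =
      ((Dk T 1).ncard : ℤ) - l := by
  have hU : Dk T 1 = {p | p ∈ Dk T 1 ∧ Br T p.1 p.2 ⊆ Br T q.1 q.2} ∪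
      {p | p ∈ Dk T 1 ∧ Disjoint (Br T p.1 p.2) (Br T q.1 q.2)} := by
    ext p
    simp only [Set.mem_union, Set.mem_ofPred_eq]
    constructor
    · intro hp
      rw [D1_Br hp, Set.singleton_subset_iff, Set.disjoint_singleton_left]
      tauto
    · tauto
  have hD : Disjoint {p | p ∈ Dk T 1 ∧ Br T p.1 p.2 ⊆ Br T q.1 q.2}
      {p | p ∈ Dk T 1 ∧ Disjoint (Br T p.1 p.2) (Br T q.1 q.2)} := by
    rw [Set.disjoint_left]
    rintro p ⟨h1, h2⟩ ⟨-, h3⟩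
    exact Set.disjoint_left.1 h3 (self_mem_Br _ _) (h2 (self_mem_Br _ _))
  have := Set.ncard_union_eq hD
  rw [← hU, h] at this
  omega

end

theorem main_aux {V : Type} [Fintype V] (T : SimpleGraph V) (t : V)
    (hsp : IsTwoSpiderWithTorso T t)
    (hshort : ∀ u : V, T.Adj t u → 2 * legOrder T t u ≤ Fintype.card V)
    (n : ℕ) (hn : 4 ≤ n) (hnd : 2 * n < Fintype.card V) :
      (cCoeff T {Fintype.card V - n, n} =
        rho T (SimpleGraph.pathGraph n) ⟨0, by omega⟩ + rho T (Rtwo n) ⟨0, by omega⟩) ∧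
      ((cCoeff T {Fintype.card V - n, n - 1, 1} : ℤ) =
        ((cCoeff T {Fintype.card V - 1, 1} : ℤ) - 1) *
            (rho T (SimpleGraph.pathGraph (n - 1)) ⟨0, by omega⟩ : ℤ) +
        ((cCoeff T {Fintype.card V - 1, 1} : ℤ) - 2) *
            (rho T (Rtwo (n - 1)) ⟨0, by omega⟩ : ℤ) +
        2 * (rho T (SimpleGraph.pathGraph n) ⟨0, by omega⟩ : ℤ) +
        3 * (rho T (Rtwo n) ⟨0, by omega⟩ : ℤ)) := by
  have hT := hsp.1
  have hDk : ∀ k (hk : 3 ≤ k), 2 * k < Fintype.card V →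
      Dk T k = {q | Emb T (SimpleGraph.pathGraph k) ⟨0, by omega⟩ q} ∪
        {q | Emb T (Rtwo k) ⟨0, by omega⟩ q} := by
    intro k hk hkd
    ext q
    constructor
    · intro hq
      exact structure_lemma hsp hshort k hk hkd hq
    · rintro (h | h)
      · exact Emb_ncard h
      · exact Emb_ncard h
  have hdis : ∀ k (hk : 3 ≤ k),
      Disjoint {q | Emb T (SimpleGraph.pathGraph k) ⟨0, by omega⟩ q}
        {q | Emb T (Rtwo k) ⟨0, by omega⟩ q} := by
    intro k hk
    rw [Set.disjoint_left]
    intro q h1 h2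
    have e1 := path_count hT k hk h1
    have e2 := Rtwo_count hT k hk h2
    omega
  have D1 := hDk n (by omega) hnd
  have D2 := hDk (n - 1) (by omega) (by omega)
  have E1 := hdis n (by omega)
  have E2 := hdis (n - 1) (by omega)
  rw [cCoeff_two hT n hnd, cCoeff_three hT n hn hnd, cCoeff_two hT 1 (by omega),
    rho_eq hT, rho_eq hT, rho_eq hT, rho_eq hT]
  constructor
  · rw [D1, Set.ncard_union_eq E1]
  have N1 : NN T 1 (n - 1) = {z : (V × V) × (V × V) | z.2 ∈ Dk T (n - 1) ∧
      (z.1 ∈ Dk T 1 ∧ Disjoint (Br T z.1.1 z.1.2) (Br T z.2.1 z.2.2))} := by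
    ext z
    simp only [NN, Set.mem_ofPred_eq]
    tauto
  have C1 := count_pairs _ _ _
    (fun p q : V × V => p ∈ Dk T 1 ∧ Disjoint (Br T p.1 p.2) (Br T q.1 q.2)) _ _ D2 E2
    (fun q hq => outside_count q 1 (path_count hT (n - 1) (by omega) hq))
    (fun q hq => outside_count q 2 (Rtwo_count hT (n - 1) (by omega) hq))
  have C2 := count_pairs _ _ _
    (fun p q : V × V => p ∈ Dk T 1 ∧ Br T p.1 p.2 ⊆ Br T q.1 q.2) 1 2 D1 E1
    (fun q hq => by rw [path_count hT n (by omega) hq]; rfl)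
    (fun q hq => by rw [Rtwo_count hT n (by omega) hq]; rfl)
  have C3 := count_pairs _ _ _
    (fun p q : V × V => p ∈ Dk T (n - 1) ∧ Br T p.1 p.2 ⊆ Br T q.1 q.2) 1 1 D1 E1
    (fun q hq => by
      rw [child_count hT hq (by omega) (Emb_ncard hq) ⟨1, by omega⟩ (by
        rintro ⟨i, hi⟩
        rw [SimpleGraph.pathGraph_adj]
        simp only [Fin.mk.injEq]
        omega)]
      rfl)
    (fun q hq => by
      rw [child_count hT hq (by omega) (Emb_ncard hq) ⟨1, by omega⟩ (by
        rintro ⟨i, hi⟩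
        rw [Rtwo_adj]
        simp only [Fin.mk.injEq]
        omega)]
      rfl)
  rw [NN_swap hT 1 n (by omega), NN_swap hT (n - 1) n (by omega), N1]
  push_cast
  rw [C1, C2, C3]
  push_cast
  ring

end TwoSpiderAux

/-- Let `T` be a 2-spider of order `d` (with torso `t`) all of whose legs have order at
most `d/2`, and which does not have exactly three legs with two of them of order one.
Then for `4 ≤ n < d/2`: `c_n(T) = ρ_{n,1}(T) + ρ_{n,2}(T)` and
`c_{n-1,1}(T) = (c₁-1)·ρ_{n-1,1}(T) + (c₁-2)·ρ_{n-1,2}(T) + 2·ρ_{n,1}(T) + 3·ρ_{n,2}(T)`. -/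
theorem twoSpider_caseII_recursion {V : Type} [Fintype V] (T : SimpleGraph V) (t : V)
    (d : ℕ) (hd : Fintype.card V = d)
    (hsp : IsTwoSpiderWithTorso T t)
    (hshort : ∀ u : V, T.Adj t u → 2 * legOrder T t u ≤ d)
    (hnot : ¬ ThreeLegsTwoSingletons T t) :
    ∀ n : ℕ, ∀ hn : 4 ≤ n, 2 * n < d →
      (cCoeff T {d - n, n} =
        rho T (SimpleGraph.pathGraph n) ⟨0, by omega⟩ + rho T (Rtwo n) ⟨0, by omega⟩) ∧
      ((cCoeff T {d - n, n - 1, 1} : ℤ) =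
        ((cCoeff T {d - 1, 1} : ℤ) - 1) *
            (rho T (SimpleGraph.pathGraph (n - 1)) ⟨0, by omega⟩ : ℤ) +
        ((cCoeff T {d - 1, 1} : ℤ) - 2) * (rho T (Rtwo (n - 1)) ⟨0, by omega⟩ : ℤ) +
        2 * (rho T (SimpleGraph.pathGraph n) ⟨0, by omega⟩ : ℤ) +
        3 * (rho T (Rtwo n) ⟨0, by omega⟩ : ℤ)) := by
  subst hd
  intro n hn hnd
  exact TwoSpiderAux.main_aux T t hsp hshort n hn hnd
end

section
/- Let T be a 2-spider of order d ≥ 9 such that it is not the case that T has exactly three legs with two of them of order one, and suppose T has a leg of order k with k > d/2. Then 3 ≤ d−k−1 < d/2 − 1, every other leg of T has order strictly less than d−k−1 (in particular the leg of order k is unique), c_{d−k−1}(T) = 1, and c_{d−k}(T) = 2. -/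
open SimpleGraph

namespace SpiderAux

theorem card_compSizes {V : Type} [Fintype V] (H : SimpleGraph V) :
    Multiset.card (compSizes H) = Nat.card H.ConnectedComponent := by
  classical
  unfold compSizes
  rw [Multiset.card_map, Finset.card_val, ← Set.ncard_coe_finset, ← Set.ncard_univ]
  congr 1
  refine Set.eq_univ_of_forall fun c => ?_
  induction c using ConnectedComponent.ind with | h v =>
  simpa using ⟨v, Reachable.refl v⟩

/-- a set closed under adjacency contains everything reachable from it. -/
theorem closed_reach {V : Type} {G : SimpleGraph V} (S : Set V)
    (hS : ∀ x y, x ∈ S → G.Adj x y → y ∈ S) {a b : V} (ha : a ∈ S) (h : G.Reachable a b) :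
    b ∈ S := by
  obtain ⟨p⟩ := h
  induction p with
  | nil => exact ha
  | cons hadj p ih => exact ih (hS _ _ ha hadj)

theorem bridge {V : Type} {T : SimpleGraph V} (hT : T.IsTree) {a b : V} (h : T.Adj a b) :
    ¬ (T.deleteEdges {s(a, b)}).Reachable a b :=
  isBridge_iff.1 (isAcyclic_iff_forall_isBridge.1 hT.isAcyclic h)

theorem reach_or {V : Type} {T : SimpleGraph V} (hT : T.IsTree) {a b : V} (x : V) :
    (T.deleteEdges {s(a, b)}).Reachable b x ∨ (T.deleteEdges {s(a, b)}).Reachable a x := by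
  refine closed_reach (G := T)
    {x | (T.deleteEdges {s(a, b)}).Reachable b x ∨ (T.deleteEdges {s(a, b)}).Reachable a x}
    ?_ (a := a) (Or.inr (Reachable.refl _)) (hT.connected.preconnected a x)
  intro x y hx hxy
  by_cases he : s(x, y) = s(a, b)
  · rw [Sym2.eq_iff] at he
    rcases he with ⟨rfl, rfl⟩ | ⟨rfl, rfl⟩
    · exact Or.inl (Reachable.refl _)
    · exact Or.inr (Reachable.refl _)
  · have : (T.deleteEdges {s(a, b)}).Adj x y := by
      rw [deleteEdges_adj]; exact ⟨hxy, he⟩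
    exact hx.imp (fun h => h.trans this.reachable) (fun h => h.trans this.reachable)

theorem compSizes_del {V : Type} [Fintype V] {T : SimpleGraph V} (hT : T.IsTree) {a b : V}
    (h : T.Adj a b) {s : ℕ}
    (hs : ((T.deleteEdges {s(a, b)}).connectedComponentMk b).supp.ncard = s) :
    compSizes (T.deleteEdges {s(a, b)}) = {s, Fintype.card V - s} := by
  classical
  set G := T.deleteEdges {s(a, b)} with hG
  have hne : G.connectedComponentMk b ≠ G.connectedComponentMk a := by
    intro hh
    exact bridge hT h (ConnectedComponent.exact hh).symm
  have himg : Finset.univ.image G.connectedComponentMk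
      = {G.connectedComponentMk b, G.connectedComponentMk a} := by
    ext c
    simp only [Finset.mem_image, Finset.mem_univ, true_and, Finset.mem_insert,
      Finset.mem_singleton]
    constructor
    · rintro ⟨x, rfl⟩
      rcases reach_or hT (a := a) (b := b) x with h1 | h1
      · exact Or.inl (ConnectedComponent.sound h1.symm)
      · exact Or.inr (ConnectedComponent.sound h1.symm)
    · rintro (rfl | rfl)
      · exact ⟨_, rfl⟩
      · exact ⟨_, rfl⟩
  have hcompl : (G.connectedComponentMk a).supp = (G.connectedComponentMk b).suppᶜ := by
    ext x
    simp only [ConnectedComponent.mem_supp_iff, Set.mem_compl_iff]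
    constructor
    · intro h1 h2
      exact hne (h2.symm.trans h1)
    · intro h1
      rcases reach_or hT (a := a) (b := b) x with h2 | h2
      · exact absurd (ConnectedComponent.sound h2.symm) h1
      · exact ConnectedComponent.sound h2.symm
  have hca : (G.connectedComponentMk a).supp.ncard = Fintype.card V - s := by
    rw [hcompl, Set.ncard_compl, hs, Nat.card_eq_fintype_card]
  have : compSizes G = ((Finset.univ.image G.connectedComponentMk).val.map
      fun c => c.supp.ncard) := by
    unfold compSizes
    congr!
  rw [this, himg, Finset.insert_val_of_notMem (by simpa using hne)]
  simp only [Finset.singleton_val, Multiset.map_cons, Multiset.map_singleton, hs, hca]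
  rfl

theorem exists_edge {V : Type} [Fintype V] {T : SimpleGraph V} (hT : T.IsTree)
    {F : Set (Sym2 V)} (hF : F ⊆ T.edgeSet)
    (hc : Multiset.card (compSizes (fromEdgeSet F)) = 2) :
    ∃ e ∈ T.edgeSet, F = T.edgeSet \ {e} := by
  classical
  rw [card_compSizes] at hc
  have hne : ∃ e ∈ T.edgeSet, e ∉ F := by
    by_contra! hcon
    have : F = T.edgeSet := Set.Subset.antisymm hF hcon
    rw [this, fromEdgeSet_edgeSet] at hc
    have := hT.connected.preconnected.subsingleton_connectedComponent
    have : Nat.card T.ConnectedComponent ≤ 1 := Finite.card_le_one_iff_subsingleton.2 this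
    omega
  obtain ⟨e, he, heF⟩ := hne
  refine ⟨e, he, ?_⟩
  refine Set.Subset.antisymm (fun x hx => ⟨hF hx, fun h => heF (h ▸ hx)⟩) ?_
  rintro e' ⟨he', hee'⟩
  by_contra he'F
  induction e with | h a b =>
  induction e' with | h c d =>
  have hsub : ∀ e0, e0 ∉ F → fromEdgeSet F ≤ T.deleteEdges {e0} := by
    intro e0 h0 x y hxy
    rw [fromEdgeSet_adj] at hxy
    rw [deleteEdges_adj]
    refine ⟨hF hxy.1, fun h => h0 ?_⟩
    rw [Set.mem_singleton_iff] at h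
    exact h ▸ hxy.1
  have hsurj := ConnectedComponent.surjective_map_ofLE (hsub _ heF)
  have h2 : 2 ≤ Nat.card (T.deleteEdges {s(a, b)}).ConnectedComponent := by
    have := card_compSizes (T.deleteEdges {s(a, b)})
    rw [← this, compSizes_del hT he rfl]
    simp
  have hle := ConnectedComponent.card_le_card_of_le (hsub _ heF)
  have heq : Nat.card (fromEdgeSet F).ConnectedComponent
      = Nat.card (T.deleteEdges {s(a, b)}).ConnectedComponent := by omega
  have hbij := (Nat.bijective_iff_surjective_and_card _).2 ⟨hsurj, heq⟩
  have hcd : (T.deleteEdges {s(a, b)}).Adj c d := by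
    rw [deleteEdges_adj]; exact ⟨he', hee'⟩
  have : (fromEdgeSet F).connectedComponentMk c = (fromEdgeSet F).connectedComponentMk d := by
    apply hbij.1
    exact ConnectedComponent.sound hcd.reachable
  exact bridge hT he' ((ConnectedComponent.exact this).mono (hsub _ he'F))

theorem cCoeff_eq {V : Type} [Fintype V] {T : SimpleGraph V} (hT : T.IsTree) (x y : ℕ) :
    cCoeff T {x, y} =
      Set.ncard {e : Sym2 V | e ∈ T.edgeSet ∧ compSizes (T.deleteEdges {e}) = {x, y}} := by
  have hdel : ∀ e, fromEdgeSet (T.edgeSet \ {e}) = T.deleteEdges {e} := by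
    intro e
    rw [← edgeSet_deleteEdges, fromEdgeSet_edgeSet]
  unfold cCoeff
  symm
  refine Set.ncard_congr (fun e _ => T.edgeSet \ {e}) ?_ ?_ ?_
  · rintro e ⟨he, hc⟩
    refine ⟨Set.sdiff_subset, ?_⟩
    rw [hdel]; exact hc
  · rintro e e' ⟨he, -⟩ ⟨he', -⟩ h
    by_contra hne
    have : e ∈ T.edgeSet \ {e'} := ⟨he, hne⟩
    have h' : T.edgeSet \ {e} = T.edgeSet \ {e'} := h
    rw [← h'] at this
    exact this.2 rfl
  · rintro F ⟨hF, hc⟩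
    obtain ⟨e, he, rfl⟩ := exists_edge hT hF (by rw [hc]; rfl)
    refine ⟨e, ⟨he, ?_⟩, rfl⟩
    rw [← hdel]; exact hc

/-! ### Legs -/

theorem reach_del_inc {V : Type} {T : SimpleGraph V} {G : SimpleGraph V} (hG : G ≤ T) {t b x : V}
    (h : G.Reachable b x) (ht : ¬ G.Reachable b t) :
    (T.deleteIncidenceSet t).Reachable b x := by
  have := closed_reach (G := G) {x | G.Reachable b x ∧ (T.deleteIncidenceSet t).Reachable b x}
    ?_ (a := b) (b := x) ⟨Reachable.refl _, Reachable.refl _⟩ h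
  · exact this.2
  · rintro x y ⟨h1, h2⟩ hxy
    have h3 := h1.trans hxy.reachable
    refine ⟨h3, h2.trans (Adj.reachable ?_)⟩
    rw [deleteIncidenceSet_adj]
    exact ⟨hG hxy, fun h => ht (h ▸ h1), fun h => ht (h ▸ h3)⟩

theorem delInc_le {V : Type} {T : SimpleGraph V} {t w : V} :
    T.deleteIncidenceSet t ≤ T.deleteEdges {s(t, w)} := by
  intro x y hxy
  rw [deleteIncidenceSet_adj] at hxy
  rw [deleteEdges_adj]
  refine ⟨hxy.1, fun h => ?_⟩
  rw [Set.mem_singleton_iff, Sym2.eq_iff] at h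
  grind

/-- The leg at `w`. -/
def leg {V : Type} (T : SimpleGraph V) (t w : V) : Set V :=
  ((T.deleteEdges {s(t, w)}).connectedComponentMk w).supp

theorem mem_leg {V : Type} {T : SimpleGraph V} {t w x : V} :
    x ∈ leg T t w ↔ (T.deleteEdges {s(t, w)}).Reachable w x := by
  unfold leg
  rw [ConnectedComponent.mem_supp_iff, ConnectedComponent.eq]
  exact reachable_comm

theorem t_notMem_leg {V : Type} {T : SimpleGraph V} (hT : T.IsTree) {t w : V} (h : T.Adj t w) :
    t ∉ leg T t w := by
  rw [mem_leg]
  exact fun hh => bridge hT h hh.symm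

theorem mem_leg_iff {V : Type} {T : SimpleGraph V} (hT : T.IsTree) {t w x : V} (h : T.Adj t w) :
    x ∈ leg T t w ↔ (T.deleteIncidenceSet t).Reachable w x := by
  rw [mem_leg]
  constructor
  · intro hh
    exact reach_del_inc (deleteEdges_le _) hh (fun h' => bridge hT h h'.symm)
  · intro hh
    exact hh.mono delInc_le

theorem leg_disj {V : Type} {T : SimpleGraph V} (hT : T.IsTree) {t w w' : V} (h : T.Adj t w)
    (h' : T.Adj t w') (hne : w ≠ w') : Disjoint (leg T t w) (leg T t w') := by
  rw [Set.disjoint_left]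
  intro x hx hx'
  rw [mem_leg_iff hT h] at hx
  rw [mem_leg_iff hT h'] at hx'
  have h1 : (T.deleteEdges {s(t, w)}).Reachable w w' := (hx.trans hx'.symm).mono delInc_le
  have h2 : (T.deleteEdges {s(t, w)}).Adj w' t := by
    rw [deleteEdges_adj]
    refine ⟨h'.symm, fun h3 => ?_⟩
    rw [Set.mem_singleton_iff, Sym2.eq_iff] at h3
    grind [h.ne, h'.ne]
  exact bridge hT h (h1.trans h2.reachable).symm

theorem exists_leg {V : Type} {T : SimpleGraph V} (hT : T.IsTree) (t y : V) (hy : y ≠ t) :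
    ∃ w, T.Adj t w ∧ y ∈ leg T t w := by
  have := closed_reach (G := T)
    {y | y ≠ t → ∃ w, T.Adj t w ∧ (T.deleteIncidenceSet t).Reachable w y}
    ?_ (a := t) (b := y) (fun h => absurd rfl h) (hT.connected.preconnected t y)
  · obtain ⟨w, h1, h2⟩ := this hy
    exact ⟨w, h1, (mem_leg_iff hT h1).2 h2⟩
  · intro x z hx hxz hz
    by_cases hxt : x = t
    · subst hxt
      exact ⟨z, hxz, Reachable.refl _⟩
    · obtain ⟨w, h1, h2⟩ := hx hxt
      refine ⟨w, h1, h2.trans (Adj.reachable ?_)⟩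
      rw [deleteIncidenceSet_adj]
      exact ⟨hxz, hxt, hz⟩

/-- The only edge leaving a leg is the one to the torso. -/
theorem leg_exit {V : Type} {T : SimpleGraph V} (hT : T.IsTree) {t w x y : V} (h : T.Adj t w)
    (hx : x ∈ leg T t w) (hy : y ∉ leg T t w) (hxy : T.Adj x y) : x = w ∧ y = t := by
  by_cases he : s(x, y) = s(t, w)
  · rw [Sym2.eq_iff] at he
    rcases he with ⟨rfl, rfl⟩ | ⟨rfl, rfl⟩
    · exact absurd hx (t_notMem_leg hT h)
    · exact ⟨rfl, rfl⟩
  · exfalso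
    apply hy
    rw [mem_leg] at hx ⊢
    refine hx.trans (Adj.reachable ?_)
    rw [deleteEdges_adj]
    exact ⟨hxy, he⟩

/-- The side away from the torso lies in a leg. -/
theorem side_subset_leg {V : Type} {T : SimpleGraph V} (hT : T.IsTree) {t b w : V} {e : Sym2 V}
    (hw : T.Adj t w) (hb : b ∈ leg T t w) (hbt : ¬ (T.deleteEdges {e}).Reachable b t) :
    ((T.deleteEdges {e}).connectedComponentMk b).supp ⊆ leg T t w := by
  intro x hx
  rw [ConnectedComponent.mem_supp_iff, ConnectedComponent.eq] at hx
  rw [mem_leg_iff hT hw] at hb ⊢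
  exact hb.trans (reach_del_inc (deleteEdges_le _) hx.symm hbt)

/-- Enumeration of a leg. -/
structure LegEnum {V : Type} (T : SimpleGraph V) (t u : V) (k : ℕ) (f : ℕ → V) (p : ℕ → ℕ) :
    Prop where
  zero : f 0 = u
  pos : 0 < k
  inj : ∀ i j, i < k → j < k → f i = f j → i = j
  mem : ∀ x, x ∈ leg T t u ↔ ∃ i, i < k ∧ f i = x
  plt : ∀ i, 0 < i → i < k → p i < i
  pge : ∀ i, 0 < i → i < k → i ≤ p i + 1 ∨ k ≤ p i + 3
  adj : ∀ i, 0 < i → i < k → T.Adj (f (p i)) (f i)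
  adj' : ∀ i j, i < k → j < k → i < j → T.Adj (f i) (f j) → i = p j

theorem legEnum_of {V : Type} {T : SimpleGraph V} (hT : T.IsTree) {t u : V} {n : ℕ} (hn : 0 < n)
    (R : SimpleGraph (Fin n)) (p : ℕ → ℕ)
    (plt : ∀ i, 0 < i → i < n → p i < i)
    (pge : ∀ i, 0 < i → i < n → i ≤ p i + 1 ∨ n ≤ p i + 3)
    (hR : ∀ i j : Fin n, i.val < j.val → (R.Adj i j ↔ i.val = p j.val))
    (h : IsRootedSubtree T s(t, u) u R ⟨0, hn⟩) :
    ∃ f, LegEnum T t u n f p ∧ legOrder T t u = n := by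
  obtain ⟨he, -, φ, hφ⟩ := h
  have hadj : ∀ i j : Fin n, R.Adj i j ↔ T.Adj (φ i : V) (φ j : V) := by
    intro i j
    rw [← φ.map_adj_iff, comap_adj, deleteEdges_adj]
    constructor
    · exact fun h => h.1
    · intro h
      refine ⟨h, fun h2 => ?_⟩
      have h3 : ∀ i : Fin n, (φ i : V) ≠ t := by
        intro i hi
        have := (φ i).2
        rw [hi] at this
        exact t_notMem_leg hT he this
      have : t ∈ s((φ i : V), (φ j : V)) := by
        rw [Set.mem_singleton_iff] at h2
        have h4 : t ∈ s(t, u) := by simp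
        rw [← h2] at h4
        exact h4
      rw [Sym2.mem_iff] at this
      rcases this with h5 | h5
      · exact h3 _ h5.symm
      · exact h3 _ h5.symm
  refine ⟨fun i => if h : i < n then (φ ⟨i, h⟩ : V) else u, ⟨?_, hn, ?_, ?_, plt, pge, ?_, ?_⟩, ?_⟩
  · simp [hn, hφ]
  · intro i j hi hj hij
    simp only [hi, hj, dif_pos] at hij
    have := φ.injective (Subtype.ext hij)
    simpa using this
  · intro x
    constructor
    · intro hx
      obtain ⟨i, hi⟩ := φ.surjective ⟨x, hx⟩
      refine ⟨i.val, i.isLt, ?_⟩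
      simp [hi]
    · rintro ⟨i, hi, rfl⟩
      simp only [hi, dif_pos]
      exact (φ ⟨i, hi⟩).2
  · intro i h0 hi
    have h1 := plt i h0 hi
    have h2 : p i < n := h1.trans hi
    simp only [hi, h2, dif_pos]
    rw [← hadj, hR _ _ h1]
  · intro i j hi hj hij h
    simp only [hi, hj, dif_pos] at h
    rw [← hadj, hR _ _ hij] at h
    exact h
  · unfold legOrder
    rw [← Nat.card_coe_set_eq, ← Nat.card_congr φ.toEquiv]
    simp

theorem legEnum_exists {V : Type} {T : SimpleGraph V} (hT : T.IsTree) {t u : V}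
    (h : IsOneLegAt T t u ∨ IsTwoLegAt T t u) :
    ∃ f p, LegEnum T t u (legOrder T t u) f p := by
  rcases h with ⟨n, hn, h⟩ | ⟨n, hn, h⟩
  · obtain ⟨f, hf, hk⟩ := legEnum_of hT hn _ (fun j => j - 1) (by intros; omega)
      (by intros; omega) (by
        intro i j hij
        rw [pathGraph_adj]
        omega) h
    exact ⟨f, _, hk ▸ hf⟩
  · obtain ⟨f, hf, hk⟩ := legEnum_of hT (by omega) _ (fun j => if j = n - 1 then n - 3 else j - 1)
      (by intro i h1 h2; split_ifs <;> omega)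
      (by intro i h1 h2; split_ifs <;> omega) (by
        intro i j hij
        have hi := i.isLt
        have hj := j.isLt
        rw [Rtwo, fromRel_adj]
        simp only [ne_eq, Fin.ext_iff]
        split_ifs <;> omega) h
    exact ⟨f, _, hk ▸ hf⟩

/-- parent vertex of the `i`-th vertex of a leg -/
def par {V : Type} (t : V) (f : ℕ → V) (p : ℕ → ℕ) (i : ℕ) : V := if i = 0 then t else f (p i)

section
variable {V : Type} {T : SimpleGraph V} {t u : V} {k : ℕ} {f : ℕ → V} {p : ℕ → ℕ}

theorem LegEnum.par_adj (L : LegEnum T t u k f p) (hu : T.Adj t u) {i : ℕ} (hi : i < k) :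
    T.Adj (par t f p i) (f i) := by
  unfold par
  split_ifs with h
  · subst h; rw [L.zero]; exact hu
  · exact L.adj i (Nat.pos_of_ne_zero h) hi

theorem LegEnum.ne_t (L : LegEnum T t u k f p) (hT : T.IsTree) (hu : T.Adj t u) {i : ℕ}
    (hi : i < k) : f i ≠ t := by
  intro h
  exact t_notMem_leg hT hu ((L.mem t).2 ⟨i, hi, h⟩)

theorem LegEnum.nbr (L : LegEnum T t u k f p) (hT : T.IsTree) (hu : T.Adj t u) {i : ℕ}
    (hi : i < k) {y : V} (hy : T.Adj (f i) y) :
    y = par t f p i ∨ ∃ j, i < j ∧ j < k ∧ y = f j ∧ p j = i := by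
  by_cases hyl : y ∈ leg T t u
  · obtain ⟨j, hj, rfl⟩ := (L.mem y).1 hyl
    rcases lt_trichotomy i j with h | h | h
    · exact Or.inr ⟨j, h, hj, rfl, (L.adj' i j hi hj h hy).symm⟩
    · subst h; exact absurd rfl hy.ne
    · left
      have := L.adj' j i hj hi h hy.symm
      unfold par
      rw [if_neg (by omega), this]
  · left
    have hil : f i ∈ leg T t u := (L.mem _).2 ⟨i, hi, rfl⟩
    obtain ⟨h1, h2⟩ := leg_exit hT hu hil hyl hy
    have : i = 0 := L.inj i 0 hi L.pos (h1.trans L.zero.symm)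
    unfold par
    rw [if_pos this, h2]

theorem LegEnum.big (L : LegEnum T t u k f p) (hT : T.IsTree) (hu : T.Adj t u) {i : ℕ}
    (hi : i + 3 ≤ k) :
    ((T.deleteEdges {s(par t f p i, f i)}).connectedComponentMk (f i)).supp.ncard = k - i := by
  have : ((T.deleteEdges {s(par t f p i, f i)}).connectedComponentMk (f i)).supp
      = f '' (Set.Ico i k) := by
    apply Set.Subset.antisymm
    · intro x hx
      rw [ConnectedComponent.mem_supp_iff, ConnectedComponent.eq] at hx
      refine closed_reach _ ?_ (a := f i) ⟨i, ⟨le_rfl, by omega⟩, rfl⟩ hx.symm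
      rintro _ y ⟨j, ⟨hj1, hj2⟩, rfl⟩ hy
      rw [deleteEdges_adj] at hy
      obtain ⟨hy, hne⟩ := hy
      rcases L.nbr hT hu hj2 hy with rfl | ⟨j', h1, h2, rfl, -⟩
      · by_cases hij : j = i
        · subst hij
          exact absurd (Sym2.eq_swap) hne
        · have h0 : 0 < j := by omega
          have := L.plt j h0 hj2
          have := L.pge j h0 hj2
          unfold par
          rw [if_neg (by omega)]
          exact ⟨p j, ⟨by omega, by omega⟩, rfl⟩
      · exact ⟨j', ⟨by omega, h2⟩, rfl⟩
    · rintro _ ⟨j, ⟨hj1, hj2⟩, rfl⟩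
      rw [ConnectedComponent.mem_supp_iff, ConnectedComponent.eq, reachable_comm]
      induction j using Nat.strong_induction_on with | _ j ih =>
      by_cases hij : j = i
      · subst hij; exact Reachable.refl _
      · have h0 : 0 < j := by omega
        have h1 := L.plt j h0 hj2
        have h2 := L.pge j h0 hj2
        refine (ih (p j) h1 (by omega) (by omega)).trans (Adj.reachable ?_)
        rw [deleteEdges_adj]
        refine ⟨L.adj j h0 hj2, fun h => ?_⟩
        rw [Set.mem_singleton_iff, Sym2.eq_iff] at h
        rcases h with ⟨-, h⟩ | ⟨h, h'⟩
        · exact hij (L.inj _ _ hj2 (by omega) h)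
        · unfold par at h'
          split_ifs at h' with h3
          · exact L.ne_t hT hu hj2 h'
          · have h4 := L.plt i (by omega) (by omega)
            have := L.inj _ _ hj2 (by omega) h'
            omega
  rw [this, Set.InjOn.ncard_image]
  · rw [← Finset.coe_Ico, Set.ncard_coe_finset, Nat.card_Ico]
  · rintro a ⟨ha1, ha2⟩ b ⟨hb1, hb2⟩ hab
    exact L.inj a b ha2 hb2 hab

theorem LegEnum.small (L : LegEnum T t u k f p) (hT : T.IsTree) (hu : T.Adj t u) {i : ℕ}
    (hik : i < k) (hi : k < i + 3) :
    ((T.deleteEdges {s(par t f p i, f i)}).connectedComponentMk (f i)).supp.ncard ≤ 2 := by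
  have hsub : ((T.deleteEdges {s(par t f p i, f i)}).connectedComponentMk (f i)).supp
      ⊆ f '' (Set.Ico i k) := by
    intro x hx
    rw [ConnectedComponent.mem_supp_iff, ConnectedComponent.eq] at hx
    have := closed_reach {x | ∃ j, i ≤ j ∧ j < k ∧ (j = i ∨ p j = i) ∧ x = f j} ?_
      (a := f i) ⟨i, le_rfl, hik, Or.inl rfl, rfl⟩ hx.symm
    · obtain ⟨j, h1, h2, -, h3⟩ := this
      exact ⟨j, ⟨h1, h2⟩, h3.symm⟩
    rintro _ y ⟨j, hj1, hj2, hj3, rfl⟩ hy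
    rw [deleteEdges_adj] at hy
    obtain ⟨hy, hne⟩ := hy
    rcases L.nbr hT hu hj2 hy with rfl | ⟨j', h1, h2, rfl, h3⟩
    · by_cases hij : j = i
      · subst hij
        exact absurd (Sym2.eq_swap) hne
      · have h0 : 0 < j := by omega
        unfold par
        rw [if_neg (by omega)]
        exact ⟨i, le_rfl, hik, Or.inl rfl, by rw [hj3.resolve_left hij]⟩
    · refine ⟨j', by omega, h2, Or.inr ?_, rfl⟩
      omega
  refine (Set.ncard_le_ncard hsub ((Set.finite_Ico i k).image f)).trans ?_
  refine (Set.ncard_image_le (Set.finite_Ico i k)).trans ?_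
  rw [← Finset.coe_Ico, Set.ncard_coe_finset, Nat.card_Ico]
  omega

end

theorem leg_pos {V : Type} [Fintype V] {T : SimpleGraph V} {t w : V} :
    0 < (leg T t w).ncard := by
  rw [Set.ncard_pos]
  exact ⟨w, mem_leg.2 (Reachable.refl _)⟩

/-- Three distinct legs and the torso. -/
theorem three_legs {V : Type} [Fintype V] {T : SimpleGraph V} (hT : T.IsTree) {t : V}
    {S : Finset V} (hS : ∀ w ∈ S, T.Adj t w) :
    ∑ w ∈ S, (leg T t w).ncard + 1 ≤ Fintype.card V := by
  classical
  have h1 : (S.biUnion fun w => (leg T t w).toFinset).card = ∑ w ∈ S, (leg T t w).ncard := by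
    rw [Finset.card_biUnion]
    · refine Finset.sum_congr rfl fun w _ => ?_
      rw [Set.ncard_eq_toFinset_card']
    · intro x hx y hy hxy
      refine Set.disjoint_toFinset.2 ?_
      exact leg_disj hT (hS x hx) (hS y hy) hxy
  rw [← h1, ← Finset.card_insert_of_notMem (a := t)]
  · exact Finset.card_le_univ _
  · simp only [Finset.mem_biUnion, Set.mem_toFinset, not_exists, not_and]
    exact fun w hw => t_notMem_leg hT (hS w hw)

theorem others {V : Type} [Fintype V] {T : SimpleGraph V} (hT : T.IsTree) {t u : V}
    (hu : T.Adj t u) (h3 : 3 ≤ (T.neighborSet t).ncard) (hnot : ¬ ThreeLegsTwoSingletons T t) :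
    (leg T t u).ncard + 4 ≤ Fintype.card V ∧
    ∀ w, T.Adj t w → w ≠ u → (leg T t w).ncard + (leg T t u).ncard + 2 ≤ Fintype.card V := by
  classical
  have key : ∀ w, T.Adj t w → w ≠ u → ∃ x, T.Adj t x ∧ x ≠ u ∧ x ≠ w := by
    intro w hw hwu
    by_contra! hcon
    have : T.neighborSet t ⊆ ({u, w} : Set V) := by
      intro x hx
      by_cases h : x = u
      · exact Or.inl h
      · exact Or.inr (hcon x hx h)
    have := Set.ncard_le_ncard this
    rw [Set.ncard_pair hwu.symm] at this
    omega
  have sum3 : ∀ w x, T.Adj t w → T.Adj t x → w ≠ u → x ≠ u → x ≠ w →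
      (leg T t u).ncard + (leg T t w).ncard + (leg T t x).ncard + 1 ≤ Fintype.card V := by
    intro w x hw hx h1 h2 h3
    have := three_legs hT (t := t) (S := {u, w, x}) (by
      intro y hy
      simp only [Finset.mem_insert, Finset.mem_singleton] at hy
      rcases hy with rfl | rfl | rfl <;> assumption)
    rw [Finset.sum_insert (by simp [h1.symm, h2.symm]), Finset.sum_insert (by simp [h3.symm]),
      Finset.sum_singleton] at this
    omega
  constructor
  · obtain ⟨w, hw, hwu⟩ : ∃ w, T.Adj t w ∧ w ≠ u := by
      by_contra! hcon
      have : T.neighborSet t ⊆ ({u} : Set V) := fun x hx => hcon x hx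
      have := Set.ncard_le_ncard this
      rw [Set.ncard_singleton] at this
      omega
    obtain ⟨x, hx, hxu, hxw⟩ := key w hw hwu
    have hs := sum3 w x hw hx hwu hxu hxw
    have hpw := leg_pos (T := T) (t := t) (w := w)
    have hpx := leg_pos (T := T) (t := t) (w := x)
    by_contra hlt
    have hw1 : (leg T t w).ncard = 1 := by omega
    have hx1 : (leg T t x).ncard = 1 := by omega
    apply hnot
    refine ⟨?_, w, x, hxw.symm, hw, hx, hw1, hx1⟩
    have : T.neighborSet t = ({u, w, x} : Set V) := by
      apply Set.Subset.antisymm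
      · intro z hz
        by_contra hzn
        simp only [Set.mem_insert_iff, Set.mem_singleton_iff, not_or] at hzn
        obtain ⟨z1, z2, z3⟩ := hzn
        have := three_legs hT (t := t) (S := {u, w, x, z}) (by
          intro y hy
          simp only [Finset.mem_insert, Finset.mem_singleton] at hy
          rcases hy with rfl | rfl | rfl | rfl <;> assumption)
        rw [Finset.sum_insert (by simp [hwu.symm, hxu.symm, Ne.symm z1]),
          Finset.sum_insert (by simp [hxw.symm, Ne.symm z2]),
          Finset.sum_insert (by simp [Ne.symm z3]),
          Finset.sum_singleton] at this
        have hpz := leg_pos (T := T) (t := t) (w := z)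
        omega
      · rintro z (rfl | rfl | rfl) <;> assumption
    rw [this, Set.ncard_eq_toFinset_card']
    simp [hwu.symm, hxu.symm, hxw.symm]
  · intro w hw hwu
    obtain ⟨x, hx, hxu, hxw⟩ := key w hw hwu
    have hs := sum3 w x hw hx hwu hxu hxw
    have hpx := leg_pos (T := T) (t := t) (w := x)
    omega

/-- Every edge either cuts off a small part or is one of the long-leg edges. -/
theorem trichotomy {V : Type} [Fintype V] {T : SimpleGraph V} (hT : T.IsTree) {t u : V}
    {k : ℕ} {f : ℕ → V} {p : ℕ → ℕ} (L : LegEnum T t u k f p) (hu : T.Adj t u) (m : ℕ)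
    (hm : 3 ≤ m) (hoth : ∀ w, T.Adj t w → w ≠ u → (leg T t w).ncard < m)
    {e : Sym2 V} (he : e ∈ T.edgeSet) :
    (∃ s, s < m ∧ compSizes (T.deleteEdges {e}) = {s, Fintype.card V - s}) ∨
    ∃ i, i + 3 ≤ k ∧ e = s(par t f p i, f i) := by
  have main : ∀ i, i < k → (∃ s, s < m ∧ compSizes (T.deleteEdges {s(par t f p i, f i)})
        = {s, Fintype.card V - s}) ∨
      ∃ j, j + 3 ≤ k ∧ s(par t f p i, f i) = s(par t f p j, f j) := by
    intro i hi
    by_cases h : i + 3 ≤ k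
    · exact Or.inr ⟨i, h, rfl⟩
    · left
      have := L.small hT hu hi (by omega)
      exact ⟨_, by omega, compSizes_del hT (L.par_adj hu hi) rfl⟩
  have aux : ∀ a b, T.Adj a b → ¬ (T.deleteEdges {s(a, b)}).Reachable b t →
      (∃ s, s < m ∧ compSizes (T.deleteEdges {s(a, b)}) = {s, Fintype.card V - s}) ∨
      ∃ i, i + 3 ≤ k ∧ s(a, b) = s(par t f p i, f i) := by
    intro a b hab hbt
    have hbt' : b ≠ t := fun h => hbt (h ▸ Reachable.refl _)
    obtain ⟨w, hw, hb⟩ := exists_leg hT t b hbt'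
    by_cases hwu : w = u
    · subst hwu
      obtain ⟨j, hj, rfl⟩ := (L.mem b).1 hb
      rcases L.nbr hT hu hj hab.symm with rfl | ⟨i, h1, h2, rfl, h3⟩
      · exact main j hj
      · have : s(f i, f j) = s(par t f p i, f i) := by
          unfold par
          rw [if_neg (by omega), h3, Sym2.eq_swap]
        rw [this]
        exact main i h2
    · left
      have h1 := Set.ncard_le_ncard (side_subset_leg hT hw hb hbt)
      have h2 := hoth w hw hwu
      exact ⟨_, by omega, compSizes_del hT hab rfl⟩
  induction e with | h a b =>
  by_cases hbt : (T.deleteEdges {s(a, b)}).Reachable b t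
  · have := aux b a (Adj.symm he) (by
      rw [Sym2.eq_swap]
      intro h
      exact bridge hT he (h.trans hbt.symm))
    rw [Sym2.eq_swap] at this
    exact this
  · exact aux a b he hbt

theorem pair_eq {a b c d : ℕ} (h : ({a, b} : Multiset ℕ) = {c, d}) :
    (a = c ∧ b = d) ∨ (a = d ∧ b = c) := by
  have h1 : a ∈ ({c, d} : Multiset ℕ) := by rw [← h]; simp
  have h2 : a + b = c + d := by simpa using congrArg Multiset.sum h
  simp only [Multiset.insert_eq_cons, Multiset.mem_cons, Multiset.mem_singleton] at h1
  omega

end SpiderAux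

/-- Let `T` be a 2-spider of order `d ≥ 9` (with torso `t`) which does not have exactly
three legs with two of them of order one, and suppose `T` has a leg of order `k > d/2`.
Then `3 ≤ d - k - 1 < d/2 - 1`, every other leg has order strictly less than `d - k - 1`
(in particular the leg of order `k` is unique), `c_{d-k-1}(T) = 1` and `c_{d-k}(T) = 2`. -/
theorem twoSpider_longLeg {V : Type} [Fintype V] (T : SimpleGraph V) (t : V)
    (d k : ℕ) (hd : Fintype.card V = d) (hd9 : 9 ≤ d)
    (hsp : IsTwoSpiderWithTorso T t)
    (hnot : ¬ ThreeLegsTwoSingletons T t)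
    (u : V) (hu : T.Adj t u) (hk : legOrder T t u = k) (hlong : d < 2 * k) :
    3 ≤ d - k - 1 ∧ 2 * (d - k - 1) + 2 < d ∧
    (∀ u' : V, T.Adj t u' → u' ≠ u → legOrder T t u' < d - k - 1) ∧
    cCoeff T {d - (d - k - 1), d - k - 1} = 1 ∧
    cCoeff T {d - (d - k), d - k} = 2 := by
  obtain ⟨hT, hdeg, hlegs⟩ := hsp
  obtain ⟨f, p, L⟩ := SpiderAux.legEnum_exists hT (hlegs u hu)
  rw [hk] at L
  have hk' : (SpiderAux.leg T t u).ncard = k := hk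
  obtain ⟨hA, hB⟩ := SpiderAux.others hT hu hdeg hnot
  rw [hk', hd] at hA
  have hC : ∀ w, T.Adj t w → w ≠ u → (SpiderAux.leg T t w).ncard < d - k - 1 := by
    intro w hw hwu
    have := hB w hw hwu
    rw [hk', hd] at this
    omega
  have hE : ∀ i, i + 3 ≤ k → compSizes (T.deleteEdges {s(SpiderAux.par t f p i, f i)})
      = {k - i, d - (k - i)} := by
    intro i hi
    have := SpiderAux.compSizes_del hT (L.par_adj hu (by omega)) (L.big hT hu hi)
    rw [hd] at this
    exact this
  have hmem : ∀ i, i + 3 ≤ k → s(SpiderAux.par t f p i, f i) ∈ T.edgeSet :=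
    fun i hi => L.par_adj hu (by omega)
  have hcase : ∀ m, d - k - 1 ≤ m → 2 * m < d → ∀ e ∈ T.edgeSet,
      compSizes (T.deleteEdges {e}) = {d - m, m} →
      ∃ i, i + 3 ≤ k ∧ e = s(SpiderAux.par t f p i, f i) ∧ (k - i = m ∨ k - i = d - m) := by
    intro m hm hm2 e he hc
    rcases SpiderAux.trichotomy hT L hu (d - k - 1) (by omega) hC he with ⟨s, hs, hcs⟩ | ⟨i, hi, rfl⟩
    · rw [hd, hc] at hcs
      rcases SpiderAux.pair_eq hcs with h | h <;> omega
    · refine ⟨i, hi, rfl, ?_⟩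
      rw [hE i hi] at hc
      rcases SpiderAux.pair_eq hc with h | h <;> omega
  refine ⟨by omega, by omega, hC, ?_, ?_⟩
  · rw [SpiderAux.cCoeff_eq hT, Set.ncard_eq_one]
    refine ⟨s(SpiderAux.par t f p (2 * k + 1 - d), f (2 * k + 1 - d)), ?_⟩
    ext e
    simp only [Set.mem_ofPred_eq, Set.mem_singleton_iff]
    constructor
    · rintro ⟨he, hc⟩
      obtain ⟨i, hi, rfl, h⟩ := hcase (d - k - 1) le_rfl (by omega) e he hc
      have : i = 2 * k + 1 - d := by omega
      rw [this]
    · rintro rfl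
      refine ⟨hmem _ (by omega), ?_⟩
      rw [hE _ (by omega), Multiset.pair_comm]
      congr 2 <;> omega
  · rw [SpiderAux.cCoeff_eq hT, Set.ncard_eq_two]
    refine ⟨s(SpiderAux.par t f p 0, f 0), s(SpiderAux.par t f p (2 * k - d), f (2 * k - d)),
      ?_, ?_⟩
    · intro h
      have ht : t ∈ s(SpiderAux.par t f p 0, f 0) := by simp [SpiderAux.par]
      rw [h, Sym2.mem_iff] at ht
      rcases ht with h1 | h1
      · unfold SpiderAux.par at h1
        rw [if_neg (by omega)] at h1
        have := L.plt (2 * k - d) (by omega) (by omega)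
        exact L.ne_t hT hu (by omega) h1.symm
      · exact L.ne_t hT hu (by omega) h1.symm
    · ext e
      simp only [Set.mem_ofPred_eq, Set.mem_insert_iff, Set.mem_singleton_iff]
      constructor
      · rintro ⟨he, hc⟩
        obtain ⟨i, hi, rfl, h⟩ := hcase (d - k) (by omega) (by omega) e he hc
        rcases h with h | h
        · have : i = 2 * k - d := by omega
          rw [this]; exact Or.inr rfl
        · have : i = 0 := by omega
          rw [this]; exact Or.inl rfl
      · rintro (rfl | rfl)
        · refine ⟨hmem _ (by omega), ?_⟩
          rw [hE _ (by omega)]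
          have h1 : d - (d - k) = k := by omega
          rw [h1, Nat.sub_zero]
        · refine ⟨hmem _ (by omega), ?_⟩
          rw [hE _ (by omega), Multiset.pair_comm]
          congr 2 <;> omega
end

section
/- If T₁ and T₂ are trees of the same order d with d ≤ 7 such that c_λ(T₁) = c_λ(T₂) for every partition λ of d (equivalently, such that T₁ and T₂ have equal chromatic symmetric functions), then T₁ and T₂ are isomorphic as graphs. -/
open SimpleGraph

namespace SmallTrees

/-- Parent of vertex `j` in the tree coded by `l` (newest vertex first). -/
def par : List ℕ → ℕ → ℕ
  | [], _ => 0
  | a :: l, j => if j = l.length + 1 then a else par l j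

/-- Codes in which each new vertex is attached to an older one. -/
def Valid : List ℕ → Prop
  | [] => True
  | a :: l => a ≤ l.length ∧ Valid l

instance decValid : (l : List ℕ) → Decidable (Valid l)
  | [] => isTrue trivial
  | a :: l => haveI := decValid l; inferInstanceAs (Decidable (a ≤ l.length ∧ Valid l))

/-- Root of the component of `i` when the edges above the vertices in `S` are kept. -/
def lab : List ℕ → Finset ℕ → ℕ → ℕ
  | [], _, i => i
  | a :: l, S, i => if i = l.length + 1 then (if i ∈ S then lab l S a else i) else lab l S i

/-- Adjacency as a relation on numbers. -/
def Rel (l : List ℕ) (i j : ℕ) : Prop := i ≠ j ∧ ((1 ≤ j ∧ par l j = i) ∨ (1 ≤ i ∧ par l i = j))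

instance (l : List ℕ) (i j : ℕ) : Decidable (Rel l i j) :=
  inferInstanceAs (Decidable (_ ∧ _))

/-- The tree coded by `l`. -/
def G (l : List ℕ) : SimpleGraph (Fin (l.length + 1)) where
  Adj i j := Rel l i.val j.val
  symm := ⟨fun i j h => by unfold Rel at *; omega⟩
  loopless := ⟨fun i h => h.1 rfl⟩

/-- Component sizes, computably. -/
def sizes (l : List ℕ) (S : Finset ℕ) : Multiset ℕ :=
  ((Finset.range (l.length + 1)).filter fun i => lab l S i = i).val.map fun c =>
    ((Finset.range (l.length + 1)).filter fun j => lab l S j = c).card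

/-- Computable version of `cCoeff`. -/
def cnt (l : List ℕ) (lam : Multiset ℕ) : ℕ :=
  ((Finset.Icc 1 l.length).powerset.filter fun S => sizes l S = lam).card

lemma par_lt {l : List ℕ} (h : Valid l) {j : ℕ} (h1 : 1 ≤ j) (h2 : j ≤ l.length) :
    par l j < j := by
  induction l with
  | nil => simp at h2; omega
  | cons a l ih =>
    obtain ⟨ha, hl⟩ := h
    simp only [par]
    simp only [List.length_cons] at h2
    split_ifs with hj
    · omega
    · exact ih hl (by omega)

lemma lab_not_mem (l : List ℕ) (S : Finset ℕ) {i : ℕ} (h : i ∉ S) : lab l S i = i := by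
  induction l with
  | nil => rfl
  | cons a l ih => simp [lab, h, ih]

lemma lab_mem {l : List ℕ} (h : Valid l) (S : Finset ℕ) {i : ℕ} (h1 : 1 ≤ i)
    (h2 : i ≤ l.length) (hS : i ∈ S) : lab l S i = lab l S (par l i) := by
  induction l with
  | nil => simp at h2; omega
  | cons a l ih =>
    obtain ⟨ha, hl⟩ := h
    simp only [List.length_cons] at h2
    by_cases hi : i = l.length + 1
    · have : a ≠ l.length + 1 := by omega
      simp [par, lab, hi ▸ hS, hi, this]
    · have := par_lt hl h1 (by omega)
      have h3 : par l i ≠ l.length + 1 := by omega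
      simp [par, lab, hi, h3, ih hl (by omega)]

lemma lab_le {l : List ℕ} (h : Valid l) (S : Finset ℕ) (i : ℕ) : lab l S i ≤ i := by
  induction l generalizing i with
  | nil => simp [lab]
  | cons a l ih =>
    obtain ⟨ha, hl⟩ := h
    simp only [lab]
    split_ifs with h1 h2
    · exact (ih hl a).trans (by omega)
    · rfl
    · exact ih hl i

/-- The edge set selected by `S`. -/
def FF (l : List ℕ) (S : Finset ℕ) : Set (Sym2 (Fin (l.length + 1))) :=
  {e | ∃ i j : Fin (l.length + 1), j.val ∈ S ∧ par l j.val = i.val ∧ e = s(i, j)}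

lemma compSizes_of_lab {n : ℕ} (H : SimpleGraph (Fin n)) (r : ℕ → ℕ)
    (hr : ∀ i, r i ≤ i)
    (hadj : ∀ i j, H.Adj i j → r i = r j)
    (hreach : ∀ i : Fin n, H.Reachable i ⟨r i, (hr i).trans_lt i.2⟩) :
    compSizes H = ((Finset.range n).filter fun i => r i = i).val.map fun c =>
      ((Finset.range n).filter fun j => r j = c).card := by
  classical
  have hreq : ∀ i j : Fin n, H.Reachable i j ↔ r i = r j := by
    intro i j
    constructor
    · rintro ⟨w⟩
      induction w with
      | nil => rfl
      | cons h _ ih => exact (hadj _ _ h).trans ih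
    · intro h
      have h1 := hreach i
      have h2 := (hreach j).symm
      simp only [h] at h1
      exact h1.trans h2
  have hrr : ∀ i : Fin n, r (r i) = r i := fun i => ((hreq _ _).1 (hreach i)).symm
  have e1 : Finset.univ.image H.connectedComponentMk =
      (Finset.univ.filter fun i : Fin n => r i = i).image H.connectedComponentMk := by
    ext c
    simp only [Finset.mem_image, Finset.mem_univ, true_and, Finset.mem_filter]
    constructor
    · rintro ⟨i, rfl⟩
      exact ⟨⟨r i, (hr i).trans_lt i.2⟩, hrr i, ConnectedComponent.eq.2 (hreach i).symm⟩
    · rintro ⟨i, -, rfl⟩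
      exact ⟨i, rfl⟩
  have e2 : Set.InjOn H.connectedComponentMk
      ((Finset.univ.filter fun i : Fin n => r i = i : Finset (Fin n)) : Set (Fin n)) := by
    intro i hi j hj hij
    simp only [Finset.coe_filter, Finset.mem_univ, true_and, Set.mem_ofPred_eq] at hi hj
    have := (hreq i j).1 (ConnectedComponent.eq.1 hij)
    ext; omega
  have e3 : ((Finset.range n).filter fun i => r i = i) =
      (Finset.univ.filter fun i : Fin n => r i = i).map Fin.valEmbedding := by
    ext k
    simp only [Finset.mem_filter, Finset.mem_range, Finset.mem_map, Finset.mem_univ, true_and,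
      Fin.valEmbedding_apply]
    constructor
    · rintro ⟨h, h'⟩
      exact ⟨⟨k, h⟩, h', rfl⟩
    · rintro ⟨i, h, rfl⟩
      exact ⟨i.2, h⟩
  have e4 : compSizes H = (Finset.univ.image H.connectedComponentMk).val.map
      fun c => c.supp.ncard := by
    unfold compSizes; congr!
  rw [e4, e1, Finset.image_val_of_injOn e2, e3, Finset.map_val, Multiset.map_map,
    Multiset.map_map]
  apply Multiset.map_congr rfl
  intro i hi
  simp only [Finset.mem_val, Finset.mem_filter, Finset.mem_univ, true_and] at hi
  simp only [Function.comp, Fin.valEmbedding_apply]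
  rw [← Set.ncard_coe_finset, ← Set.ncard_image_of_injective _ Fin.val_injective]
  congr 1
  ext k
  simp only [Set.mem_image, ConnectedComponent.mem_supp_iff, ConnectedComponent.eq, hreq,
    Finset.coe_filter, Finset.mem_range, Set.mem_ofPred_eq, hi]
  constructor
  · rintro ⟨j, h, rfl⟩
    exact ⟨j.2, h⟩
  · rintro ⟨h, h'⟩
    exact ⟨⟨k, h⟩, h', rfl⟩

lemma compSizes_FF {l : List ℕ} (h : Valid l) {S : Finset ℕ} (hS : S ⊆ Finset.Icc 1 l.length) :
    compSizes (SimpleGraph.fromEdgeSet (FF l S)) = sizes l S := by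
  have key : ∀ i j : Fin (l.length + 1), j.val ∈ S → par l j.val = i.val →
      lab l S j = lab l S i := by
    intro i j hj hp
    have := Finset.mem_Icc.1 (hS hj)
    rw [lab_mem h S this.1 this.2 hj, hp]
  refine compSizes_of_lab _ (lab l S) (lab_le h S) ?_ ?_
  · intro i j hij
    rw [SimpleGraph.fromEdgeSet_adj] at hij
    obtain ⟨⟨a, b, hb, hp, he⟩, -⟩ := hij
    rcases Sym2.eq_iff.1 he with ⟨rfl, rfl⟩ | ⟨rfl, rfl⟩
    · exact (key _ _ hb hp).symm
    · exact key _ _ hb hp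
  · intro ⟨i, hi⟩
    induction i using Nat.strong_induction_on with
    | _ i ih =>
      by_cases hiS : i ∈ S
      · have h1 := Finset.mem_Icc.1 (hS hiS)
        have hlt := par_lt h h1.1 h1.2
        have h2 := ih (par l i) hlt (hlt.trans hi)
        have h3 : (SimpleGraph.fromEdgeSet (FF l S)).Adj ⟨i, hi⟩ ⟨par l i, hlt.trans hi⟩ := by
          rw [SimpleGraph.fromEdgeSet_adj]
          refine ⟨⟨⟨par l i, hlt.trans hi⟩, ⟨i, hi⟩, hiS, rfl, Sym2.eq_swap⟩, ?_⟩
          simp only [ne_eq, Fin.mk.injEq]; omega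
        have h4 := h3.reachable.trans h2
        convert h4 using 2
        exact lab_mem h S h1.1 h1.2 hiS
      · have : (⟨lab l S i, (lab_le h S i).trans_lt hi⟩ : Fin (l.length + 1)) = ⟨i, hi⟩ := by
          simp [lab_not_mem l S hiS]
        simp only [this]
        exact Reachable.refl _

lemma cCoeff_G {l : List ℕ} (h : Valid l) (lam : Multiset ℕ) : cCoeff (G l) lam = cnt l lam := by
  classical
  have hinj : ∀ (S S' : Finset ℕ), S ⊆ Finset.Icc 1 l.length → S' ⊆ Finset.Icc 1 l.length →
      FF l S ⊆ FF l S' → S ⊆ S' := by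
    intro S S' hS hS' hsub k hk
    have h1 := Finset.mem_Icc.1 (hS hk)
    have hlt := par_lt h h1.1 h1.2
    have hm : s((⟨par l k, by omega⟩ : Fin (l.length + 1)), ⟨k, by omega⟩) ∈ FF l S :=
      ⟨_, _, hk, rfl, rfl⟩
    obtain ⟨i, j, hj, hp, he⟩ := hsub hm
    have h2 := Finset.mem_Icc.1 (hS' hj)
    have hlt2 := par_lt h h2.1 h2.2
    rcases Sym2.eq_iff.1 he with ⟨ha, hb⟩ | ⟨ha, hb⟩
    · rw [← hb] at hj
      exact hj
    · rw [Fin.ext_iff] at ha hb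
      simp only at ha hb
      omega
  have hset : {F : Set (Sym2 (Fin (l.length + 1))) | F ⊆ (G l).edgeSet ∧
      compSizes (SimpleGraph.fromEdgeSet F) = lam} =
      FF l '' (((Finset.Icc 1 l.length).powerset.filter fun S => sizes l S = lam :
        Finset (Finset ℕ)) : Set (Finset ℕ)) := by
    ext F
    simp only [Set.mem_ofPred_eq, Set.mem_image, Finset.coe_filter, Finset.mem_powerset]
    constructor
    · rintro ⟨hF, hc⟩
      let S : Finset ℕ := (Finset.Icc 1 l.length).filter fun k =>
        ∃ i j : Fin (l.length + 1), j.val = k ∧ par l k = i.val ∧ s(i, j) ∈ F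
      have hS : S ⊆ Finset.Icc 1 l.length := Finset.filter_subset _ _
      have hFS : FF l S = F := by
        ext e
        constructor
        · rintro ⟨i, j, hj, hp, rfl⟩
          obtain ⟨i', j', hj', hp', hm⟩ := (Finset.mem_filter.1 hj).2
          have : i' = i := by ext; omega
          have : j' = j := by ext; omega
          subst_vars
          exact hm
        · intro he
          have hG := hF he
          induction e with
          | _ x y =>
          have hG' : Rel l x.val y.val := hG
          have key : ∀ x y : Fin (l.length + 1), s(x, y) ∈ F → 1 ≤ y.val → par l y = x →
              s(x, y) ∈ FF l S := by
            intro x y he h1 h2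
            refine ⟨x, y, ?_, h2, rfl⟩
            refine Finset.mem_filter.2 ⟨Finset.mem_Icc.2 ⟨h1, by omega⟩, x, y, rfl, h2, he⟩
          rcases hG'.2 with ⟨h1, h2⟩ | ⟨h1, h2⟩
          · exact key x y he h1 h2
          · rw [Sym2.eq_swap] at he ⊢
            exact key y x he h1 h2
      exact ⟨S, ⟨hS, by rw [← compSizes_FF h hS, hFS, hc]⟩, hFS⟩
    · rintro ⟨S, ⟨hS, hs⟩, rfl⟩
      refine ⟨?_, by rw [compSizes_FF h hS, hs]⟩
      rintro e ⟨i, j, hj, hp, rfl⟩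
      have h2 := Finset.mem_Icc.1 (hS hj)
      have hlt2 := par_lt h h2.1 h2.2
      have h3 : i.val ≠ j.val := by omega
      exact ⟨h3, Or.inl ⟨h2.1, hp⟩⟩
  rw [cCoeff, hset, Set.ncard_image_of_injOn, Set.ncard_coe_finset, cnt]
  intro S hS S' hS' he
  simp only [Finset.coe_filter, Finset.mem_powerset, Set.mem_ofPred_eq] at hS hS'
  exact (hinj S S' hS.1 hS'.1 he.subset).antisymm (hinj S' S hS'.1 hS.1 he.symm.subset)

lemma compSizes_iso {V W : Type} [Fintype V] [Fintype W] {H : SimpleGraph V} {K : SimpleGraph W}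
    (φ : H ≃g K) : compSizes K = compSizes H := by
  classical
  have e4 : ∀ {V : Type} [Fintype V] (H : SimpleGraph V), compSizes H =
      (Finset.univ.image H.connectedComponentMk).val.map fun c => c.supp.ncard := by
    intro V _ H
    unfold compSizes; congr!
  have e5 : Finset.univ.image K.connectedComponentMk =
      (Finset.univ.image H.connectedComponentMk).image φ.connectedComponentEquiv := by
    ext c
    simp only [Finset.mem_image, Finset.mem_univ, true_and, exists_exists_eq_and]
    constructor
    · rintro ⟨w, rfl⟩
      exact ⟨φ.symm w, by simp [Iso.connectedComponentEquiv]⟩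
    · rintro ⟨v, rfl⟩
      exact ⟨φ v, rfl⟩
  rw [e4, e4, e5, Finset.image_val_of_injOn φ.connectedComponentEquiv.injective.injOn,
    Multiset.map_map]
  apply Multiset.map_congr rfl
  intro c _
  have := Nat.card_congr (ConnectedComponent.isoEquivSupp φ c)
  exact this.symm

lemma cCoeff_le {V W : Type} [Fintype V] [Fintype W] {T : SimpleGraph V} {K : SimpleGraph W}
    (φ : T ≃g K) (lam : Multiset ℕ) : cCoeff T lam ≤ cCoeff K lam := by
  classical
  unfold cCoeff
  refine Set.ncard_le_ncard_of_injOn (fun F => Sym2.map φ '' F) ?_ ?_ (Set.toFinite _)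
  · rintro F ⟨hF, hc⟩
    refine ⟨?_, ?_⟩
    · rintro _ ⟨e, he, rfl⟩
      have := hF he
      induction e with
      | _ x y => exact φ.map_adj_iff.2 this
    · rw [← hc]
      refine compSizes_iso ⟨φ.toEquiv, ?_⟩
      intro a b
      have hinj : Function.Injective (Sym2.map φ) := Sym2.map.injective φ.injective
      simp only [SimpleGraph.fromEdgeSet_adj]
      have : s(φ.toEquiv a, φ.toEquiv b) = Sym2.map φ s(a, b) := rfl
      rw [this, hinj.mem_set_image]
      simp
  · intro F _ F' _ h
    exact (Sym2.map.injective φ.injective).image_injective h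

lemma cCoeff_iso {V W : Type} [Fintype V] [Fintype W] {T : SimpleGraph V} {K : SimpleGraph W}
    (φ : T ≃g K) (lam : Multiset ℕ) : cCoeff T lam = cCoeff K lam :=
  (cCoeff_le φ lam).antisymm (cCoeff_le φ.symm lam)

/-- Numerical check that the map listed in `f` is an isomorphism. -/
def Chk (l l' f : List ℕ) : Prop :=
  l.length = l'.length ∧ ∀ i ∈ List.range (l.length + 1), f.getD i 0 ≤ l.length ∧
    ∀ j ∈ List.range (l.length + 1), (f.getD i 0 = f.getD j 0 → i = j) ∧
      (Rel l' (f.getD i 0) (f.getD j 0) ↔ Rel l i j)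

instance (l l' f : List ℕ) : Decidable (Chk l l' f) := inferInstanceAs (Decidable (_ ∧ _))

lemma Chk.iso {l l' f : List ℕ} (h : Chk l l' f) : Nonempty (G l ≃g G l') := by
  obtain ⟨hl, h⟩ := h
  have h1 : ∀ i : Fin (l.length + 1), f.getD i 0 < l'.length + 1 := fun i => by
    have := (h i (List.mem_range.2 i.2)).1
    omega
  let g : Fin (l.length + 1) → Fin (l'.length + 1) := fun i => ⟨f.getD i 0, h1 i⟩
  have hg : Function.Bijective g := by
    rw [Fintype.bijective_iff_injective_and_card]
    refine ⟨?_, by simp [hl]⟩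
    intro i j hij
    ext
    exact ((h i (List.mem_range.2 i.2)).2 j (List.mem_range.2 j.2)).1 (Fin.ext_iff.1 hij)
  exact ⟨⟨Equiv.ofBijective g hg, fun {i j} =>
    ((h i (List.mem_range.2 i.2)).2 j (List.mem_range.2 j.2)).2⟩⟩

/-- Catalogue of the trees of order at most seven. -/
def cat : List (List ℕ) :=
  [[], [0], [0, 0], [0, 0, 0], [1, 0, 0], [0, 0, 0, 0], [1, 0, 0, 0], [2, 1, 0, 0],
   [0, 0, 0, 0, 0], [1, 0, 0, 0, 0], [1, 1, 0, 0, 0], [2, 1, 0, 0, 0], [4, 1, 0, 0, 0],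
   [3, 2, 1, 0, 0], [0, 0, 0, 0, 0, 0], [1, 0, 0, 0, 0, 0], [1, 1, 0, 0, 0, 0],
   [2, 1, 0, 0, 0, 0], [5, 1, 0, 0, 0, 0], [2, 1, 1, 0, 0, 0], [3, 2, 1, 0, 0, 0],
   [4, 2, 1, 0, 0, 0], [4, 4, 1, 0, 0, 0], [5, 4, 1, 0, 0, 0], [4, 3, 2, 1, 0, 0]]

/-- Relabellings used to bring extended trees into catalogue form. -/
def perms : List (List ℕ) :=
  [[0, 1, 2, 3, 4, 5, 6], [0, 1, 2, 3, 4, 6, 5], [0, 1, 2, 3, 5, 4, 6], [0, 1, 2, 3, 5, 6, 4],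
   [0, 1, 2, 4, 3, 5, 6], [0, 1, 2, 4, 5, 3, 6], [0, 1, 2, 4, 5, 6, 3], [0, 1, 3, 2, 4, 5, 6],
   [0, 1, 3, 2, 4, 6, 5], [0, 1, 3, 4, 2, 5, 6], [0, 2, 1, 3, 4, 5, 6], [0, 2, 1, 3, 5, 4, 6],
   [0, 2, 1, 3, 6, 4, 5], [0, 2, 1, 4, 3, 5, 6], [0, 2, 3, 1, 4, 5, 6], [0, 2, 3, 4, 1, 5, 6],
   [0, 2, 3, 4, 5, 1, 6], [1, 0, 2, 3, 4, 5, 6], [1, 0, 3, 2, 4, 5, 6], [1, 0, 3, 2, 5, 4, 6],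
   [1, 0, 4, 2, 3, 5, 6], [1, 0, 4, 2, 5, 3, 6], [1, 0, 4, 2, 6, 5, 3], [1, 0, 4, 5, 2, 3, 6],
   [1, 0, 4, 5, 2, 6, 3], [1, 0, 4, 5, 3, 2, 6], [1, 0, 5, 6, 2, 3, 4], [1, 4, 0, 5, 2, 3, 6],
   [1, 4, 0, 5, 2, 6, 3], [4, 1, 5, 0, 6, 2, 3]]

/-- Partitions whose coefficients separate the catalogue. -/
def lams : List (Multiset ℕ) := [{2, 2}, {1, 4}, {1, 1, 4}, {3, 4}, {1, 1, 2, 3}]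

lemma cat_valid : ∀ l ∈ cat, Valid l := by decide +kernel

/-- For each tree and attaching vertex: catalogue index and relabelling index of the extension. -/
def wit : List (List ℕ × List (ℕ × ℕ)) :=
  [([], [(1, 0)]),
   ([0], [(2, 0), (2, 17)]),
   ([0, 0], [(3, 0), (4, 0), (4, 10)]),
   ([0, 0, 0], [(5, 0), (6, 0), (6, 10), (6, 14)]),
   ([1, 0, 0], [(6, 4), (6, 20), (7, 0), (7, 18)]),
   ([0, 0, 0, 0], [(8, 0), (9, 0), (9, 10), (9, 14), (9, 15)]),
   ([1, 0, 0, 0], [(9, 2), (10, 0), (11, 0), (11, 7), (12, 0)]),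
   ([2, 1, 0, 0], [(11, 5), (12, 21), (12, 27), (13, 0), (13, 13)]),
   ([0, 0, 0, 0, 0], [(14, 0), (15, 0), (15, 10), (15, 14), (15, 15), (15, 16)]),
   ([1, 0, 0, 0, 0], [(15, 1), (16, 0), (17, 0), (17, 7), (17, 9), (18, 0)]),
   ([1, 1, 0, 0, 0], [(16, 3), (16, 26), (19, 0), (19, 7), (19, 23), (19, 25)]),
   ([2, 1, 0, 0, 0], [(17, 3), (19, 1), (19, 12), (20, 0), (21, 0), (21, 11)]),
   ([4, 1, 0, 0, 0], [(18, 3), (19, 24), (21, 1), (21, 8), (22, 0), (23, 0)]),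
   ([3, 2, 1, 0, 0], [(21, 6), (21, 22), (23, 28), (23, 29), (24, 0), (24, 19)])]

/-- The coefficients at the partitions in `lams`. -/
def vals : List (List ℕ × List ℕ) :=
  [([], [0, 0, 0, 0, 0]),
   ([0], [0, 0, 0, 0, 0]),
   ([0, 0], [0, 0, 0, 0, 0]),
   ([0, 0, 0], [0, 0, 0, 0, 0]),
   ([1, 0, 0], [1, 0, 0, 0, 0]),
   ([0, 0, 0, 0], [0, 4, 0, 0, 0]),
   ([1, 0, 0, 0], [0, 3, 0, 0, 0]),
   ([2, 1, 0, 0], [0, 2, 0, 0, 0]),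
   ([0, 0, 0, 0, 0], [0, 0, 10, 0, 0]),
   ([1, 0, 0, 0, 0], [0, 0, 7, 0, 0]),
   ([1, 1, 0, 0, 0], [0, 0, 6, 0, 0]),
   ([2, 1, 0, 0, 0], [0, 0, 5, 0, 0]),
   ([4, 1, 0, 0, 0], [0, 0, 4, 0, 0]),
   ([3, 2, 1, 0, 0], [0, 0, 3, 0, 0]),
   ([0, 0, 0, 0, 0, 0], [0, 0, 0, 0, 0]),
   ([1, 0, 0, 0, 0, 0], [0, 0, 0, 0, 6]),
   ([1, 1, 0, 0, 0, 0], [0, 0, 0, 1, 9]),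
   ([2, 1, 0, 0, 0, 0], [0, 0, 0, 0, 8]),
   ([5, 1, 0, 0, 0, 0], [0, 0, 0, 1, 12]),
   ([2, 1, 1, 0, 0, 0], [0, 0, 0, 1, 10]),
   ([3, 2, 1, 0, 0, 0], [0, 0, 0, 0, 9]),
   ([4, 2, 1, 0, 0, 0], [0, 0, 0, 1, 11]),
   ([4, 4, 1, 0, 0, 0], [0, 0, 0, 2, 14]),
   ([5, 4, 1, 0, 0, 0], [0, 0, 0, 2, 13]),
   ([4, 3, 2, 1, 0, 0], [0, 0, 0, 2, 12])]

/-- Lookup in `wit`. -/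
def witAt (l : List ℕ) (a : ℕ) : ℕ × ℕ := ((wit.lookup l).getD []).getD a (0, 0)

/-- Lookup in `vals`. -/
def valAt (l : List ℕ) (k : ℕ) : ℕ := ((vals.lookup l).getD []).getD k 0

lemma cat_step_aux : ∀ l ∈ cat, l.length < 6 → ∀ a ∈ List.range (l.length + 1),
    (witAt l a).1 < cat.length ∧
      Chk (a :: l) (cat.getD (witAt l a).1 []) (perms.getD (witAt l a).2 []) := by decide +kernel

lemma cat_step (l : List ℕ) (hl : l ∈ cat) (h6 : l.length < 6) (a : ℕ)
    (ha : a ∈ List.range (l.length + 1)) : ∃ l' ∈ cat, ∃ f, Chk (a :: l) l' f := by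
  obtain ⟨h1, h2⟩ := cat_step_aux l hl h6 a ha
  refine ⟨_, ?_, _, h2⟩
  rw [List.getD_eq_getElem _ _ h1]
  exact List.getElem_mem _

lemma cnt_vals : ∀ l ∈ cat, ∀ k ∈ List.range 5, (lams.getD k 0).sum = l.length + 1 →
    cnt l (lams.getD k 0) = valAt l k := by decide +kernel

lemma vals_sep : ∀ l ∈ cat, ∀ l' ∈ cat, l.length = l'.length → l ≠ l' →
    ∃ k ∈ List.range 5, (lams.getD k 0).sum = l.length + 1 ∧ valAt l k ≠ valAt l' k := by
  decide +kernel

lemma lams_pos : ∀ k ∈ List.range 5, ∀ i ∈ lams.getD k 0, 0 < i := by decide +kernel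

lemma cat_sep (l : List ℕ) (hl : l ∈ cat) (l' : List ℕ) (hl' : l' ∈ cat)
    (hlen : l.length = l'.length) (hne : l ≠ l') :
    ∃ lam : Multiset ℕ, (∀ i ∈ lam, 0 < i) ∧ lam.sum = l.length + 1 ∧
      cnt l lam ≠ cnt l' lam := by
  obtain ⟨k, hk, hs, hv⟩ := vals_sep l hl l' hl' hlen hne
  refine ⟨_, lams_pos k hk, hs, ?_⟩
  rw [cnt_vals l hl k hk hs, cnt_vals l' hl' k hk (hlen ▸ hs)]
  exact hv

lemma iso_cons {V : Type} [Fintype V] (T : SimpleGraph V) (l : List ℕ) (v u : V)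
    (huv : T.Adj v u) (hu : ∀ y, T.Adj v y → y = u) (hl : Valid l)
    (φ : T.induce {v}ᶜ ≃g G l) (hcard : Fintype.card V = l.length + 2) :
    ∃ a ∈ List.range (l.length + 1), Nonempty (T ≃g G (a :: l)) := by
  classical
  have huv' : u ∈ ({v}ᶜ : Set V) := fun h => huv.ne h.symm
  let a : Fin (l.length + 1) := φ ⟨u, huv'⟩
  refine ⟨a, List.mem_range.2 a.2, ?_⟩
  let g : V → Fin ((a.val :: l).length + 1) := fun x =>
    if h : x = v then Fin.last _ else Fin.castSucc (φ ⟨x, h⟩)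
  have gv : (g v).val = l.length + 1 := by simp [g]
  have gn : ∀ x (h : x ≠ v), (g x).val = (φ ⟨x, h⟩).val := fun x h => by simp [g, h]
  have hg : Function.Bijective g := by
    rw [Fintype.bijective_iff_injective_and_card]
    refine ⟨?_, by simp [hcard]⟩
    intro x y hxy
    rw [Fin.ext_iff] at hxy
    by_cases hx : x = v <;> by_cases hy : y = v
    · rw [hx, hy]
    · rw [hx, gv, gn y hy] at hxy
      have := (φ ⟨y, hy⟩).2
      omega
    · rw [hy, gv, gn x hx] at hxy
      have := (φ ⟨x, hx⟩).2
      omega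
    · rw [gn x hx, gn y hy] at hxy
      have := φ.injective (Fin.ext hxy)
      exact congrArg Subtype.val this
  have hvx : ∀ x, x ≠ v → (Rel (a.val :: l) (g v) (g x) ↔ T.Adj v x) := by
    intro x hx
    have hb := (φ ⟨x, hx⟩).2
    have ha := a.2
    have hp : 1 ≤ (φ ⟨x, hx⟩).val → par l (φ ⟨x, hx⟩).val < (φ ⟨x, hx⟩).val :=
      fun h => par_lt hl h (by omega)
    have e : T.Adj v x ↔ a.val = (φ ⟨x, hx⟩).val := by
      rw [← Fin.ext_iff]
      constructor
      · intro h
        have := hu x h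
        subst this
        rfl
      · intro h
        have := φ.injective h
        have : u = x := congrArg Subtype.val this
        exact this ▸ huv
    rw [e, gv, gn x hx]
    have hne : (φ ⟨x, hx⟩).val ≠ l.length + 1 := by omega
    simp only [Rel, par, hne, if_false, if_true]
    omega
  have symm : ∀ i j, Rel (a.val :: l) i j ↔ Rel (a.val :: l) j i := by
    intro i j; unfold Rel; omega
  refine ⟨⟨Equiv.ofBijective g hg, fun {x y} => ?_⟩⟩
  change Rel (a.val :: l) (g x) (g y) ↔ T.Adj x y
  by_cases hx : x = v <;> by_cases hy : y = v
  · subst hx; subst hy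
    simp [Rel]
  · subst hx
    exact hvx y hy
  · subst hy
    rw [symm, T.adj_comm]
    exact hvx x hx
  · have h1 : T.Adj x y ↔ Rel l (φ ⟨x, hx⟩).val (φ ⟨y, hy⟩).val :=
      (φ.map_adj_iff (v := ⟨x, hx⟩) (w := ⟨y, hy⟩)).symm
    rw [h1, gn x hx, gn y hy]
    have hbx := (φ ⟨x, hx⟩).2
    have hby := (φ ⟨y, hy⟩).2
    have hnx : (φ ⟨x, hx⟩).val ≠ l.length + 1 := by omega
    have hny : (φ ⟨y, hy⟩).val ≠ l.length + 1 := by omega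
    simp only [Rel, par, hnx, hny, if_false]

lemma exists_cat (n : ℕ) : ∀ {V : Type} [Fintype V] (T : SimpleGraph V), T.IsTree →
    Fintype.card V = n + 1 → n ≤ 6 → ∃ l ∈ cat, l.length = n ∧ Nonempty (T ≃g G l) := by
  classical
  induction n with
  | zero =>
    intro V _ T _ hV _
    refine ⟨[], by decide, rfl, ?_⟩
    have : Subsingleton V := Fintype.card_le_one_iff_subsingleton.1 (by omega)
    have e : V ≃ Fin 1 := Fintype.equivFinOfCardEq (by omega)
    have : Subsingleton (Fin (([] : List ℕ).length + 1)) := by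
      change Subsingleton (Fin 1); infer_instance
    refine ⟨⟨e, fun {x y} => ?_⟩⟩
    constructor
    · intro h
      exact absurd (Subsingleton.elim _ _) h.ne
    · intro h
      exact absurd (Subsingleton.elim _ _) h.ne
  | succ n ih =>
    intro V _ T hT hV hn
    have : Nontrivial V := Fintype.one_lt_card_iff_nontrivial.1 (by omega)
    obtain ⟨v, hv⟩ := hT.exists_vert_degree_one_of_nontrivial
    have hc : (T.induce {v}ᶜ).IsTree :=
      ⟨hT.1.induce_compl_singleton_of_degree_eq_one hv, hT.2.induce _⟩
    have hcard : Fintype.card ({v}ᶜ : Set V) = n + 1 := by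
      rw [Fintype.card_compl_set, hV]; simp
    obtain ⟨l, hl, hln, ⟨φ⟩⟩ := ih _ hc hcard (by omega)
    obtain ⟨u, hvu, hu⟩ := degree_eq_one_iff_existsUnique_adj.1 hv
    obtain ⟨a, ha, ⟨ψ⟩⟩ := iso_cons T l v u hvu hu (cat_valid l hl) φ (by omega)
    obtain ⟨l', hl', f, hf⟩ := cat_step l hl (by omega) a ha
    obtain ⟨χ⟩ := hf.iso
    refine ⟨l', hl', ?_, ⟨ψ.trans χ⟩⟩
    have := hf.1
    simp only [List.length_cons] at this
    omega

end SmallTrees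

/-- Two trees of the same order `d ≤ 7` with the same coefficients `c_λ` for every
partition `λ` of `d` (equivalently, with equal chromatic symmetric functions) are
isomorphic as graphs. -/
theorem trees_le_seven_distinguished {V₁ V₂ : Type} [Fintype V₁] [Fintype V₂]
    (T₁ : SimpleGraph V₁) (T₂ : SimpleGraph V₂) (d : ℕ)
    (hd₁ : Fintype.card V₁ = d) (hd₂ : Fintype.card V₂ = d) (hd7 : d ≤ 7)
    (h₁ : T₁.IsTree) (h₂ : T₂.IsTree)
    (hc : ∀ lam : Multiset ℕ, (∀ i ∈ lam, 0 < i) → lam.sum = d →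
      cCoeff T₁ lam = cCoeff T₂ lam) :
    Nonempty (T₁ ≃g T₂) := by
  have : Nonempty V₁ := h₁.1.nonempty
  have hpos : 0 < d := hd₁ ▸ Fintype.card_pos
  obtain ⟨l₁, m₁, n₁, ⟨φ₁⟩⟩ := SmallTrees.exists_cat (d - 1) T₁ h₁ (by omega) (by omega)
  obtain ⟨l₂, m₂, n₂, ⟨φ₂⟩⟩ := SmallTrees.exists_cat (d - 1) T₂ h₂ (by omega) (by omega)
  by_cases hl : l₁ = l₂
  · subst hl
    exact ⟨φ₁.trans φ₂.symm⟩
  · obtain ⟨lam, hp, hs, hne⟩ := SmallTrees.cat_sep l₁ m₁ l₂ m₂ (by omega) hl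
    refine absurd ?_ hne
    rw [← SmallTrees.cCoeff_G (SmallTrees.cat_valid _ m₁),
      ← SmallTrees.cCoeff_G (SmallTrees.cat_valid _ m₂), ← SmallTrees.cCoeff_iso φ₁,
      ← SmallTrees.cCoeff_iso φ₂]
    exact hc lam hp (by omega)
end
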